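/- arXiv:math/9903097 — 3 statements merged into one kernel-verified Lean document; each statement's English description precedes it below -/
import Mathlib

section
/- Let F|K be an algebraic function field and P a rational discrete place of F|K, i.e., FP = K and the value group v_PF is order-isomorphic to ℤ. Then (F|K,P) is uniformizable. -/
/-! Common valuation-theoretic notions, following F.-V. Kuhlmann,
"On local uniformization in arbitrary characteristic I".

A valued field `(F, P)` is modelled by a field `F` together with a
`ValuationSubring F` (the valuation ring `𝓞` of the place `P`). -/

namespace LocalUnif

variable {F : Type*} [Field F]

/-- `x` lies in the maximal ideal of the valuation subring `O`,
i.e. the residue `xP` is `0` (equivalently `v_P x > 0`, or `x = 0`). -/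
def InMax (O : ValuationSubring F) (x : F) : Prop := x = 0 ∨ x⁻¹ ∉ O

/-- `x` is a unit of the valuation subring `O`, i.e. `v_P x = 0`. -/
def IsVUnit (O : ValuationSubring F) (x : F) : Prop := x ≠ 0 ∧ x ∈ O ∧ x⁻¹ ∈ O

/-- The valuation with valuation ring `O` is trivial on the subfield `K`;
equivalently, every nonzero element of `K` is a unit of `O`. -/
def TrivialOn (O : ValuationSubring F) (K : Subfield F) : Prop :=
  ∀ x ∈ K, x ∈ O ∧ x⁻¹ ∈ O

/-- The residue field of `O` equals (the isomorphic image of) the subfield `K`: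
every element of `O` is congruent to an element of `K` modulo the maximal ideal.
(For a place `P` of `F|K` this says that `P` is a rational place, `FP = K`.) -/
def ResidueEq (O : ValuationSubring F) (K : Subfield F) : Prop :=
  ∀ x ∈ O, ∃ c ∈ K, InMax O (x - c)

/-- The residue field of `O` is algebraic over (the image of) `K`; for a place of
`F|K` this says that `P` is zero-dimensional. -/
def ResidueAlgebraic (O : ValuationSubring F) (K : Subfield F) : Prop :=
  ∀ x ∈ O, ∃ p : Polynomial F, p ≠ 0 ∧ (∀ i, p.coeff i ∈ K) ∧ InMax O (Polynomial.eval x p)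

/-- The values `v_P (x i)` are rationally independent modulo `v_P K`:
no nontrivial ℤ-linear combination of the values lies in `ℚ ⊗ v_P K`
(equivalently, in `v_P K`, by clearing denominators). -/
def ValIndepMod (O : ValuationSubring F) (K : Subfield F) {ρ : ℕ} (x : Fin ρ → F) : Prop :=
  (∀ i, x i ≠ 0) ∧
  ∀ e : Fin ρ → ℤ, (∃ c ∈ K, c ≠ 0 ∧ IsVUnit O ((∏ i, x i ^ e i) / c)) → e = 0

/-- The residues `(y i)P` are algebraically independent over the residue field `KP`:
for every polynomial with coefficients in `𝓞_K = K ∩ O`, at least one of which is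
a unit, the value of the polynomial at `y` is a unit (so its residue is nonzero). -/
def ResIndep (O : ValuationSubring F) (K : Subfield F) {τ : ℕ} (y : Fin τ → F) : Prop :=
  (∀ i, y i ∈ O) ∧
  ∀ p : MvPolynomial (Fin τ) F, (∀ m, p.coeff m ∈ K ∧ p.coeff m ∈ O) →
    (∃ m, IsVUnit O (p.coeff m)) → ¬ InMax O (MvPolynomial.eval y p)

/-- `dim_ℚ (ℚ ⊗ (v_P F / v_P K)) = ρ`: there is a maximal set of `ρ` elements of `F`
whose values are rationally independent modulo `v_P K`. -/
def RatRankEq (O : ValuationSubring F) (K : Subfield F) (ρ : ℕ) : Prop :=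
  (∃ x : Fin ρ → F, ValIndepMod O K x) ∧ ∀ x : Fin (ρ + 1) → F, ¬ ValIndepMod O K x

/-- `trdeg (FP | KP) = τ`: there is a maximal set of `τ` elements of `O` whose
residues are algebraically independent over `KP`. -/
def ResTrdegEq (O : ValuationSubring F) (K : Subfield F) (τ : ℕ) : Prop :=
  (∃ y : Fin τ → F, ResIndep O K y) ∧ ∀ y : Fin (τ + 1) → F, ¬ ResIndep O K y

/-- `trdeg (F | K) = d`. -/
def TrdegEq (K : Subfield F) (d : ℕ) : Prop :=
  ∃ t : Fin d → F, IsTranscendenceBasis ↥K t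

/-- `P` is an Abhyankar place of `F|K`:
`trdeg F|K = trdeg FP|K + dim_ℚ (ℚ ⊗ v_P F)`. -/
def IsAbhyankar (O : ValuationSubring F) (K : Subfield F) : Prop :=
  ∃ d ρ τ : ℕ, d = ρ + τ ∧ TrdegEq K d ∧ RatRankEq O K ρ ∧ ResTrdegEq O K τ

/-- The value group of `O` is archimedean ordered (rank at most 1):
for any two positive values `v_P a, v_P b` there is `n` with `n · v_P a ≥ v_P b`. -/
def RankOne (O : ValuationSubring F) : Prop :=
  ∀ a b : F, a ≠ 0 → InMax O a → b ≠ 0 → InMax O b → ∃ n : ℕ, a ^ n / b ∈ O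

/-- The value group of `O` has (rank) at least `r`: there is a chain of `r` positive
values, each infinitely larger than the previous one. -/
def RankAtLeast (O : ValuationSubring F) (r : ℕ) : Prop :=
  ∃ a : Fin r → F, (∀ i, a i ≠ 0 ∧ InMax O (a i)) ∧
    ∀ i j : Fin r, i < j → ∀ n : ℕ, a i ^ n / a j ∉ O

/-- The value group of `O` has rank exactly `r`. -/
def RankEq (O : ValuationSubring F) (r : ℕ) : Prop :=
  RankAtLeast O r ∧ ¬ RankAtLeast O (r + 1)

/-- The valuation is discrete: its value group is order isomorphic to `ℤ`,
i.e. there is a uniformizer `π` with every value an integer multiple of `v_P π`. -/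
def IsDiscrete (O : ValuationSubring F) : Prop :=
  ∃ π : F, π ≠ 0 ∧ InMax O π ∧ ∀ x : F, x ≠ 0 → ∃ n : ℤ, IsVUnit O (x / π ^ n)

/-- `F|K` is an algebraic function field: a finitely generated field extension of
transcendence degree at least 1. -/
def IsFunctionField (K : Subfield F) : Prop :=
  (∃ S : Finset F, IntermediateField.adjoin ↥K (S : Set F) = ⊤) ∧
  ∃ x : F, Transcendental ↥K x

/-- The data of a weak uniformization of `(𝓛|𝓚, P)` (both subfields of an ambient
valued field `F`, `𝓚 ⊆ 𝓛`) with uniformizing transcendence basis `t` and generators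
`η`: there are polynomials `f i` in `n` variables `X₁, …, Xₙ` with coefficients in
`𝓞_𝓚[t₁,…,tₛ]` such that (U1) `X j` does not occur in `f i` for `i < j`,
(U2) `f i (η) = 0`, and (U3) the residue of `det J_f (η)` is nonzero; moreover `t`
is a transcendence basis of `𝓛|𝓚` inside `𝓞_𝓛` and `𝓛 = 𝓚(t, η)`. -/
def UnifData (𝓛 𝓚 : Subfield F) (O : ValuationSubring F) {s n : ℕ}
    (t : Fin s → F) (η : Fin n → F) : Prop :=
  (∀ i, t i ∈ 𝓛 ∧ t i ∈ O) ∧ (∀ i, η i ∈ 𝓛 ∧ η i ∈ O) ∧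
  AlgebraicIndependent ↥𝓚 t ∧
  (∀ z ∈ 𝓛, IsAlgebraic ↥(IntermediateField.adjoin ↥𝓚 (Set.range t)) z) ∧
  Subfield.closure ((𝓚 : Set F) ∪ Set.range t ∪ Set.range η) = 𝓛 ∧
  ∃ f : Fin n → MvPolynomial (Fin n) F,
    (∀ i m, (f i).coeff m ∈
      Subring.closure ((↑(𝓚.toSubring ⊓ O.toSubring) : Set F) ∪ Set.range t)) ∧
    (∀ i j : Fin n, (i : ℕ) < (j : ℕ) → MvPolynomial.degreeOf j (f i) = 0) ∧
    (∀ i, MvPolynomial.eval η (f i) = 0) ∧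
    IsVUnit O (Matrix.det (Matrix.of fun i j : Fin n =>
      MvPolynomial.eval η (MvPolynomial.pderiv j (f i))))

/-- `(𝓛|𝓚, P)` is uniformizable with respect to `ζ₁, …, ζ_m`:
there is a weak uniformization whose generators `η` include all the `ζ k`. -/
def UnifWrt (𝓛 𝓚 : Subfield F) (O : ValuationSubring F) {m : ℕ} (ζ : Fin m → F) : Prop :=
  ∃ (s n : ℕ) (t : Fin s → F) (η : Fin n → F),
    UnifData 𝓛 𝓚 O t η ∧ ∃ σ : Fin m → Fin n, ∀ k, η (σ k) = ζ k

/-- `(𝓛|𝓚, P)` is uniformizable: uniformizable with respect to every finite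
list of elements of `𝓞_𝓛`. -/
def UnifIn (𝓛 𝓚 : Subfield F) (O : ValuationSubring F) : Prop :=
  ∀ (m : ℕ) (ζ : Fin m → F), (∀ k, ζ k ∈ 𝓛 ∧ ζ k ∈ O) → UnifWrt 𝓛 𝓚 O ζ

section Defectless

variable {K L : Type*} [Field K] [Field L]

/-- The values of the `a i` lie in pairwise distinct cosets modulo the value group of
the ground field along `φ`; thus there are at least `e` distinct cosets. -/
def ValClassIndep (φ : K →+* L) (OL : ValuationSubring L) {e : ℕ} (a : Fin e → L) : Prop :=
  (∀ i, a i ≠ 0) ∧ ∀ i j : Fin e, i ≠ j →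
    ¬ ∃ c : K, c ≠ 0 ∧ IsVUnit OL (a i / (a j * φ c))

/-- The ramification index `e = (v_P L : v_P K)` of `OL` over the ground field along `φ`. -/
def RamIdxEq (φ : K →+* L) (OL : ValuationSubring L) (e : ℕ) : Prop :=
  (∃ a : Fin e → L, ValClassIndep φ OL a) ∧ ∀ a : Fin (e + 1) → L, ¬ ValClassIndep φ OL a

/-- The residues of the `b i` are linearly independent over the residue field of the
ground field along `φ`. -/
def ResLinIndep (φ : K →+* L) (OK : ValuationSubring K) (OL : ValuationSubring L)
    {f : ℕ} (b : Fin f → L) : Prop :=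
  (∀ i, b i ∈ OL) ∧ ∀ c : Fin f → K, (∀ i, c i ∈ OK) → (∃ i, ¬ InMax OK (c i)) →
    ¬ InMax OL (∑ i, φ (c i) * b i)

/-- The inertia degree `f = [LP : KP]` of `OL` over `(K, OK)` along `φ`. -/
def InertiaDegEq (φ : K →+* L) (OK : ValuationSubring K) (OL : ValuationSubring L)
    (f : ℕ) : Prop :=
  (∃ b : Fin f → L, ResLinIndep φ OK OL b) ∧ ∀ b : Fin (f + 1) → L, ¬ ResLinIndep φ OK OL b

end Defectless

/-- `(K, OK)` is a defectless (stable) valued field: for every finite extension `L|K`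
(inside a fixed algebraic closure) the fundamental equality
`[L : K] = ∑ᵢ eᵢ fᵢ` holds, the sum running over all extensions of the valuation. -/
def IsDefectless (K : Type*) [Field K] (OK : ValuationSubring K) : Prop :=
  ∀ L : IntermediateField K (AlgebraicClosure K), FiniteDimensional K ↥L →
    ∃ (g : ℕ) (Os : Fin g → ValuationSubring ↥L) (e f : Fin g → ℕ),
      Function.Injective Os ∧
      (∀ O' : ValuationSubring ↥L, O'.comap (algebraMap K ↥L) = OK ↔ ∃ i, O' = Os i) ∧
      (∀ i, RamIdxEq (algebraMap K ↥L) (Os i) (e i)) ∧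
      (∀ i, InertiaDegEq (algebraMap K ↥L) OK (Os i) (f i)) ∧
      Module.finrank K ↥L = ∑ i, e i * f i

/-- The extension `𝓛|𝓚` of subfields of `F` is separable (in the general sense of
MacLane): every finitely generated subextension is separably generated, i.e. admits
a separating transcendence basis. -/
def IsSeparableExt (𝓚 𝓛 : Subfield F) : Prop :=
  ∀ S : Finset F, ↑S ⊆ (𝓛 : Set F) →
    ∃ (d : ℕ) (u : Fin d → F), (∀ i, u i ∈ 𝓛) ∧ AlgebraicIndependent ↥𝓚 u ∧
      ∀ x ∈ Subfield.closure ((𝓚 : Set F) ∪ ↑S),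
        IsSeparable ↥(IntermediateField.adjoin ↥𝓚 (Set.range u)) x

/-- The embedding of a subfield `K`, on which the valuation is trivial, into
the residue field of `O`. -/
noncomputable def resEmb (O : ValuationSubring F) (K : Subfield F) (h : ∀ x ∈ K, x ∈ O) :
    ↥K →+* IsLocalRing.ResidueField ↥O :=
  (IsLocalRing.residue ↥O).comp
    { toFun := fun x => (⟨x.1, h x.1 x.2⟩ : ↥O)
      map_one' := rfl
      map_mul' := fun _ _ => rfl
      map_zero' := rfl
      map_add' := fun _ _ => rfl }

end LocalUnif

/-!
By hypothesis `O` is a discrete valuation ring with coefficient field `K`. Choose a uniformizer `t`.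

In characteristic `p`, let `e` be a basis of `K` over the subfield of `p`-th powers. The products
`t ^ j * e b` with `j < p` span `K[t]` over its subring of `p`-th powers. They stay
independent over the `p`-th powers of `F`, because the `t ^ j` have values in different classes
modulo `p` and the residue field is `K`. Hence `F` is separable over `K(t)`, and MacLane's criterion
gives a separating transcendence basis of `F | K` formed by `t` and a family `y` of elements of `O`.

Given `z ∈ O`, let `f` be a polynomial over `K[t, y]` with `f(z) = 0` and `f'(z) = u t ^ n`, where
`u` is a unit, and write `z = q + t ^ n η` with `q ∈ K[t]`. By Taylor expansion
`f(q + t ^ n X) = t ^ (2n) g(X)` with `g(η) = 0` and `g'(η) = u`, so `η` is a simple root of `g`.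
The coefficients of `g` lie in `O` and become elements of `K[t, y']` after `y` is replaced by the
`y'` with `y = q' + t ^ m y'`, `q' ∈ K[t]`, for some `m ≥ 2n`; this uses
`K[t] ∩ t ^ n O = t ^ n K[t]`. Since `z` is a polynomial in `η`, the polynomials `g` together with
the `X - P` expressing such elements form a triangular system with unit diagonal.
-/

namespace LocalUnif

section PowIndependent

variable {R S ι : Type*}

/-- A family `e` is `n`-power independent if no nontrivial linear combination of it with `n`-th
powers as coefficients vanishes. Over a field of characteristic `p`, the `p`-power independent
families are those that are linearly independent over the subfield of `p`-th powers. -/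
def PowIndependent [CommSemiring R] (n : ℕ) (e : ι → R) : Prop :=
  ∀ (s : Finset ι) (c : ι → R), ∑ i ∈ s, c i ^ n * e i = 0 → ∀ i ∈ s, c i = 0

/-- The sums of elements `c ^ n * e i`. In characteristic `n` this is the span of the family `e`
over the subring of `n`-th powers. -/
def powSpan [CommSemiring R] (n : ℕ) (e : ι → R) : AddSubmonoid R :=
  AddSubmonoid.closure (Set.range fun x : R × ι => x.1 ^ n * e x.2)

lemma pow_mul_mem_powSpan [CommSemiring R] (n : ℕ) (e : ι → R) (c : R) (i : ι) :
    c ^ n * e i ∈ powSpan n e :=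
  AddSubmonoid.subset_closure ⟨(c, i), rfl⟩

lemma PowIndependent.map_ringEquiv [CommSemiring R] [CommSemiring S] {n : ℕ} {e : ι → R}
    (he : PowIndependent n e) (f : R ≃+* S) : PowIndependent n (f ∘ e) := by
  intro s c hc i hi
  have h := he s (f.symm ∘ c) (f.injective (by simpa using hc)) i hi
  simpa using h

lemma PowIndependent.algebraMap_isFractionRing [CommRing R] [IsDomain R] [Field S] [Algebra R S]
    [IsFractionRing R S] {n : ℕ} {e : ι → R} (he : PowIndependent n e) :
    PowIndependent n (algebraMap R S ∘ e) := by
  intro s c hc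
  obtain ⟨d, hd⟩ := IsLocalization.exist_integer_multiples (nonZeroDivisors R) s c
  have hd0 : algebraMap R S d ≠ 0 := IsFractionRing.to_map_ne_zero_of_mem_nonZeroDivisors d.2
  have : ∀ i ∈ s, ∃ a : R, algebraMap R S a = algebraMap R S d * c i := fun i hi =>
    (hd i hi).imp fun a ha => by rw [ha, Algebra.smul_def]
  choose! a ha using this
  have hsum : ∑ i ∈ s, a i ^ n * e i = 0 := by
    apply IsFractionRing.injective R S
    calc algebraMap R S (∑ i ∈ s, a i ^ n * e i)
        = ∑ i ∈ s, algebraMap R S d ^ n * (c i ^ n * (algebraMap R S ∘ e) i) := by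
          rw [map_sum]
          refine Finset.sum_congr rfl fun i hi => ?_
          rw [map_mul, map_pow, ha i hi, mul_pow, mul_assoc, Function.comp_apply]
      _ = algebraMap R S 0 := by rw [← Finset.mul_sum, hc, mul_zero, map_zero]
  intro i hi
  have := ha i hi
  rw [he s a hsum i hi, map_zero, zero_eq_mul] at this
  exact this.resolve_left hd0

section Field

variable (K : Type*) [Field K] (p : ℕ) [Fact p.Prime] [CharP K p]

lemma exists_powIndependent_powSpan_eq_top :
    ∃ (β : Set K) (e : β → K), PowIndependent p e ∧ powSpan p e = ⊤ := by
  let Kp : Subfield K := (frobenius K p).fieldRange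
  let e := Module.Basis.ofVectorSpace Kp K
  refine ⟨_, e, fun s c hc i hi => ?_, eq_top_iff.2 fun x _ => ?_⟩
  · have h := linearIndependent_iff'.1 e.linearIndependent s (fun i => ⟨c i ^ p, c i, rfl⟩) hc i hi
    exact eq_zero_of_pow_eq_zero (congrArg Subtype.val h)
  · rw [← e.linearCombination_repr x, Finsupp.linearCombination_apply]
    refine sum_mem fun i _ => ?_
    obtain ⟨c, hc⟩ := (e.repr x i).2
    change (e.repr x i : K) * e i ∈ _
    rw [← hc]
    exact pow_mul_mem_powSpan p e c i

end Field

lemma mem_powSpan_iff [CommRing R] {p : ℕ} [Fact p.Prime] [CharP R p] {e : ι → R} {x : R} :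
    x ∈ powSpan p e ↔ ∃ w : ι →₀ R, w.sum (fun i c => c ^ p * e i) = x := by
  have hp : p ≠ 0 := (Fact.out : p.Prime).ne_zero
  constructor
  · intro hx
    induction hx using AddSubmonoid.closure_induction with
    | mem x hx =>
      obtain ⟨⟨c, i⟩, rfl⟩ := hx
      exact ⟨Finsupp.single i c, Finsupp.sum_single_index (by simp [hp])⟩
    | zero => exact ⟨0, Finsupp.sum_zero_index⟩
    | add x y _ _ hx hy =>
      obtain ⟨v, rfl⟩ := hx
      obtain ⟨w, rfl⟩ := hy
      exact ⟨v + w, Finsupp.sum_add_index' (by simp [hp])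
        fun i a b => by rw [add_pow_char, add_mul]⟩
  · rintro ⟨w, rfl⟩
    exact sum_mem fun i _ => pow_mul_mem_powSpan p e (w i) i

lemma powSpan_pow_mul_algebraMap {K A : Type*} [CommSemiring K] [CommSemiring A] [Algebra K A]
    {n : ℕ} [NeZero n] {e : ι → K} (he : powSpan n e = ⊤) {x : A} (hx : Algebra.adjoin K {x} = ⊤) :
    powSpan n (fun i : Fin n × ι => x ^ (i.1 : ℕ) * algebraMap K A (e i.2)) = ⊤ := by
  have monomial_mem (m : ℕ) (a : K) : algebraMap K A a * x ^ m ∈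
      powSpan n (fun i : Fin n × ι => x ^ (i.1 : ℕ) * algebraMap K A (e i.2)) := by
    have ha : a ∈ powSpan n e := he ▸ AddSubmonoid.mem_top a
    induction ha using AddSubmonoid.closure_induction with
    | mem a ha =>
      obtain ⟨⟨c, i⟩, rfl⟩ := ha
      let r : Fin n := ⟨m % n, Nat.mod_lt m (NeZero.pos n)⟩
      have hm : x ^ m = (x ^ (m / n)) ^ n * x ^ (r : ℕ) := by
        rw [← pow_mul, ← pow_add, Nat.div_add_mod']
      convert pow_mul_mem_powSpan n _ (algebraMap K A c * x ^ (m / n)) (r, i) using 1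
      simp only [hm, map_mul, map_pow]
      ring
    | zero => simp
    | add a b _ _ ha hb => simpa only [map_add, add_mul] using add_mem ha hb
  refine eq_top_iff.2 fun y _ => ?_
  obtain ⟨f, rfl⟩ : y ∈ (Polynomial.aeval (R := K) x).range := by
    rw [← Algebra.adjoin_singleton_eq_range_aeval, hx]
    exact Algebra.mem_top
  induction f using Polynomial.induction_on' with
  | add f g hf hg => simpa using add_mem (hf trivial) (hg trivial)
  | monomial m a => simpa [Polynomial.aeval_monomial] using monomial_mem m a

lemma linearIndependent_pow_of_powIndependent {κ A F : Type*} [CommRing A] [CommRing F]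
    [Algebra A F] {p : ℕ} [Fact p.Prime] [CharP A p] [CharP F p] {e : ι → A}
    (hspan : powSpan p e = ⊤) (hindep : PowIndependent p (algebraMap A F ∘ e)) {v : κ → F}
    (hv : LinearIndependent A v) : LinearIndependent A (fun k => v k ^ p) := by
  classical
  have hp : p ≠ 0 := (Fact.out : p.Prime).ne_zero
  rw [linearIndependent_iff'] at hv ⊢
  intro s a ha
  choose w hw using fun k => mem_powSpan_iff.1 (hspan ▸ AddSubmonoid.mem_top (a k))
  let T := s.biUnion fun k => (w k).support
  have expand (k) (hk : k ∈ s) : a k = ∑ i ∈ T, w k i ^ p * e i := by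
    rw [← hw k]
    exact Finsupp.sum_of_support_subset _
      (Finset.subset_biUnion_of_mem (fun k => (w k).support) hk) _ (by simp [hp])
  have hsum : ∑ i ∈ T, (∑ k ∈ s, w k i • v k) ^ p * (algebraMap A F ∘ e) i = 0 := by
    calc ∑ i ∈ T, (∑ k ∈ s, w k i • v k) ^ p * (algebraMap A F ∘ e) i
        = ∑ i ∈ T, ∑ k ∈ s, (w k i ^ p * e i) • v k ^ p := by
          refine Finset.sum_congr rfl fun i _ => ?_
          rw [sum_pow_char, Finset.sum_mul]
          refine Finset.sum_congr rfl fun k _ => ?_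
          rw [Function.comp_apply, smul_pow, mul_smul, smul_mul_assoc, mul_comm (v k ^ p),
            ← Algebra.smul_def]
      _ = ∑ k ∈ s, a k • v k ^ p := by
          rw [Finset.sum_comm]
          exact Finset.sum_congr rfl fun k hk => by rw [expand k hk, Finset.sum_smul]
      _ = 0 := ha
  have hzero (i) (hi : i ∈ T) := hv s (w · i) (hindep T _ hsum i hi)
  intro k hk
  rw [expand k hk]
  exact Finset.sum_eq_zero fun i hi => by rw [hzero i hi k hk, zero_pow hp, zero_mul]

lemma sum_pow_mul_eq_add [CommSemiring R] {n : ℕ} (ϖ : R) (e : ι → R)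
    (w : Fin n × ι → R) (s : Finset (Fin n × ι)) (j : Fin n) :
    ∑ i ∈ s, w i ^ n * (ϖ ^ (i.1 : ℕ) * e i.2) =
      ϖ ^ (j : ℕ) * ∑ b ∈ s.preimage (Prod.mk j) (Prod.mk_right_injective j).injOn,
          w (j, b) ^ n * e b +
        ∑ i ∈ s with i.1 ≠ j, w i ^ n * (ϖ ^ (i.1 : ℕ) * e i.2) := by
  classical
  have hj : Function.Injective (Prod.mk (β := ι) j) := Prod.mk_right_injective j
  rw [← Finset.sum_filter_add_sum_filter_not s (·.1 = j), Finset.mul_sum]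
  congr 1
  symm
  calc ∑ b ∈ s.preimage (Prod.mk j) hj.injOn, ϖ ^ (j : ℕ) * (w (j, b) ^ n * e b)
      = ∑ b ∈ s.preimage (Prod.mk j) hj.injOn, w (j, b) ^ n * (ϖ ^ (j : ℕ) * e b) :=
        Finset.sum_congr rfl fun b _ => mul_left_comm _ _ _
    _ = ∑ i ∈ s with i ∈ Set.range (Prod.mk j), w i ^ n * (ϖ ^ (i.1 : ℕ) * e i.2) :=
        Finset.sum_preimage' (Prod.mk j) s hj.injOn
          fun i => w i ^ n * (ϖ ^ (i.1 : ℕ) * e i.2)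
    _ = ∑ i ∈ s with i.1 = j, w i ^ n * (ϖ ^ (i.1 : ℕ) * e i.2) := by
        congr 1
        ext ⟨i, b⟩
        simp [eq_comm]

section IsDiscreteValuationRing

variable [CommRing R] [IsDomain R] [IsDiscreteValuationRing R] {ϖ : R} {n : ℕ}
  {e : ι → R}

open IsLocalRing

lemma dvd_of_sum_pow_mul_eq_zero (hϖ : Irreducible ϖ)
    (he : PowIndependent n (residue R ∘ e)) {s : Finset (Fin n × ι)} {w : Fin n × ι → R}
    (hw : ∑ i ∈ s, w i ^ n * (ϖ ^ (i.1 : ℕ) * e i.2) = 0) (j : Fin n) :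
    ∀ b, (j, b) ∈ s → ϖ ∣ w (j, b) := by
  have dvd_iff (x : R) : ϖ ∣ x ↔ residue R x = 0 := by
    rw [residue_eq_zero_iff, hϖ.maximalIdeal_eq, Ideal.mem_span_singleton]
  induction j using WellFoundedLT.induction with
  | _ j ih =>
  let sj := s.preimage (Prod.mk j) (Prod.mk_right_injective j).injOn
  have dvd_of_ne (i) (hi : i ∈ s) (hij : i.1 ≠ j) :
      ϖ ^ (j + 1 : ℕ) ∣ w i ^ n * (ϖ ^ (i.1 : ℕ) * e i.2) := by
    rcases lt_or_gt_of_ne hij with hlt | hgt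
    · have : ϖ ^ n ∣ w i ^ n := pow_dvd_pow_of_dvd (ih i.1 hlt i.2 hi) n
      exact dvd_mul_of_dvd_left ((pow_dvd_pow ϖ j.isLt).trans this) _
    · exact dvd_mul_of_dvd_right (dvd_mul_of_dvd_left (pow_dvd_pow ϖ hgt) _) _
  rw [sum_pow_mul_eq_add ϖ e w s j] at hw
  have hdvd : ϖ ∣ ∑ b ∈ sj, w (j, b) ^ n * e b := by
    refine (mul_dvd_mul_iff_left (pow_ne_zero j hϖ.ne_zero)).1 ?_
    rw [← pow_succ, eq_neg_of_add_eq_zero_left hw, dvd_neg]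
    refine Finset.dvd_sum fun i hi => ?_
    exact dvd_of_ne i (Finset.mem_filter.1 hi).1 (Finset.mem_filter.1 hi).2
  intro b hb
  refine (dvd_iff _).2 (he sj (fun b => residue R (w (j, b))) ?_ b (Finset.mem_preimage.2 hb))
  simpa using (dvd_iff _).1 hdvd

lemma PowIndependent.pow_mul_of_residue (hϖ : Irreducible ϖ)
    (he : PowIndependent n (residue R ∘ e)) :
    PowIndependent n (fun i : Fin n × ι => ϖ ^ (i.1 : ℕ) * e i.2) := by
  intro s c hc
  have dvd (m : ℕ) : ∀ c : Fin n × ι → R, ∑ i ∈ s, c i ^ n * (ϖ ^ (i.1 : ℕ) * e i.2) = 0 →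
      ∀ i ∈ s, ϖ ^ m ∣ c i := by
    induction m with
    | zero => simp
    | succ m ih =>
      intro c hc
      have : ∀ i ∈ s, ∃ d, c i = ϖ * d := fun i hi =>
        dvd_of_sum_pow_mul_eq_zero hϖ he hc i.1 i.2 hi
      choose! d hd using this
      have hsum : ϖ ^ n * ∑ i ∈ s, d i ^ n * (ϖ ^ (i.1 : ℕ) * e i.2) = 0 := by
        rw [← hc, Finset.mul_sum]
        refine Finset.sum_congr rfl fun i hi => ?_
        rw [hd i hi, mul_pow, mul_assoc]
      intro i hi
      rw [hd i hi, pow_succ']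
      exact mul_dvd_mul_left ϖ
        (ih d ((mul_eq_zero.1 hsum).resolve_left (pow_ne_zero n hϖ.ne_zero)) i hi)
  intro i hi
  by_contra h
  obtain ⟨m, hm⟩ := FiniteMultiplicity.of_not_isUnit hϖ.not_isUnit h
  exact hm (dvd (m + 1) c hc i hi)

end IsDiscreteValuationRing

end PowIndependent

section SeparatingBasis

open IntermediateField
open scoped IntermediateField.algebraAdjoinAdjoin

variable {K F ι : Type*} [Field K] [Field F] [Algebra K F]

/-- A separating transcendence basis of `F | K`: an algebraically independent family `x` such that
`F` is separable, in particular algebraic, over `K(x)`. -/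
def IsSeparatingBasis (K : Type*) {F ι : Type*} [Field K] [Field F] [Algebra K F]
    (x : ι → F) : Prop :=
  AlgebraicIndependent K x ∧ Algebra.IsSeparable (adjoin K (Set.range x)) F

lemma IsSeparatingBasis.isTranscendenceBasis {x : ι → F} (hx : IsSeparatingBasis K x) :
    IsTranscendenceBasis K x := by
  have := hx.2
  exact isTranscendenceBasis_iff_algebraicIndependent_isAlgebraic.2
    ⟨hx.1, isAlgebraic_adjoin_iff_top.1 inferInstance⟩

lemma IsSeparatingBasis.of_forall_mem_adjoin [Finite ι] {x y : ι → F} (hx : IsSeparatingBasis K x)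
    (h : ∀ i, x i ∈ adjoin K (Set.range y)) : IsSeparatingBasis K y := by
  have hle : adjoin K (Set.range x) ≤ adjoin K (Set.range y) :=
    adjoin_le_iff.2 (Set.range_subset_iff.2 h)
  let := (inclusion hle).toAlgebra
  have : IsScalarTower (adjoin K (Set.range x)) (adjoin K (Set.range y)) F :=
    .of_algebraMap_eq fun _ => rfl
  have := hx.2
  have hsep : Algebra.IsSeparable (adjoin K (Set.range y)) F :=
    Algebra.isSeparable_tower_top_of_isSeparable (adjoin K (Set.range x)) _ F
  have : Algebra.IsAlgebraic (Algebra.adjoin K (Set.range y)) F :=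
    isAlgebraic_adjoin_iff_top.1 inferInstance
  exact ⟨(Algebra.IsAlgebraic.isTranscendenceBasis_of_lift_le_trdeg_of_finite K y
    hx.isTranscendenceBasis.lift_cardinalMk_eq_trdeg.le).1, hsep⟩

lemma IsSeparatingBasis.cons {d : ℕ} {τ : F} {v : Fin d → F} (hτ : Transcendental K τ)
    (hv : IsSeparatingBasis K⟮τ⟯ v) : IsSeparatingBasis K (Fin.cons τ v : Fin (d + 1) → F) := by
  constructor
  · have hindep : AlgebraicIndependent K (Sum.elim v fun _ : Unit => τ) :=
      (algebraicIndependent_unique_type_iff.2 hτ).sumElim_of_tower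
        (Set.range_subset_iff.2 fun _ => ⟨AdjoinSimple.gen K τ, rfl⟩) hv.1
    let e : Fin (d + 1) → Fin d ⊕ Unit := Fin.cons (Sum.inr ()) Sum.inl
    have he : Function.Injective e :=
      Fin.cons_injective_iff.2 ⟨fun ⟨_, h⟩ => Sum.inl_ne_inr h, Sum.inl_injective⟩
    convert hindep.comp e he using 1
    ext i
    cases i using Fin.cases <;> rfl
  · rw [Fin.range_cons, Set.insert_eq, ← adjoin_adjoin_left]
    exact hv.2

lemma exists_aeval_derivative_ne_zero_of_isSeparable {A E : Type*} [CommRing A] [IsDomain A]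
    [Field E] [Algebra A E] [IsFractionRing A E] [Algebra A F] [Algebra E F] [IsScalarTower A E F]
    {z : F} (hz : IsSeparable E z) :
    ∃ f : Polynomial A, Polynomial.aeval z f = 0 ∧ Polynomial.aeval z f.derivative ≠ 0 := by
  obtain ⟨b, hb, hf⟩ := IsLocalization.integerNormalization_spec (nonZeroDivisors A) (minpoly E z)
  set f := IsLocalization.integerNormalization (nonZeroDivisors A) (minpoly E z)
  refine ⟨f, IsLocalization.integerNormalization_aeval_eq_zero _ _ (minpoly.aeval E z), ?_⟩
  have hb0 : algebraMap A E b ≠ 0 := IsFractionRing.to_map_ne_zero_of_mem_nonZeroDivisors hb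
  rw [← Polynomial.aeval_map_algebraMap E, ← Polynomial.derivative_map, hf,
    algebra_compatible_smul E b, Polynomial.derivative_smul, map_smul]
  exact smul_ne_zero hb0 (hz.aeval_derivative_ne_zero (minpoly.aeval E z))

lemma exists_aeval_adjoin_derivative_ne_zero {R : Type*} [CommRing R] [Algebra K R] [Algebra R F]
    [IsScalarTower K R F] [FaithfulSMul R F] {S : Set R} {z : R}
    (hz : IsSeparable (adjoin K (algebraMap R F '' S)) (algebraMap R F z)) :
    ∃ f : Polynomial (Algebra.adjoin K S),
      Polynomial.aeval z f = 0 ∧ Polynomial.aeval z f.derivative ≠ 0 := by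
  let φ := IsScalarTower.toAlgHom K R F
  have hφ : Function.Injective φ := FaithfulSMul.algebraMap_injective R F
  let e : Algebra.adjoin K S ≃ₐ[K] Algebra.adjoin K (algebraMap R F '' S) :=
    (Subalgebra.equivMapOfInjective _ φ hφ).trans (Subalgebra.equivOfEq _ _ (AlgHom.map_adjoin φ S))
  have aeval_map (f : Polynomial (Algebra.adjoin K (algebraMap R F '' S))) :
      φ (Polynomial.aeval z (f.map (e.symm : _ →+* Algebra.adjoin K S))) =
        Polynomial.aeval (algebraMap R F z) f := by
    rw [Polynomial.aeval_def, Polynomial.eval₂_map, ← AlgHom.coe_toRingHom, Polynomial.hom_eval₂]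
    refine Polynomial.eval₂_congr (RingHom.ext fun a => ?_) rfl rfl
    exact congrArg Subtype.val (e.apply_symm_apply a)
  obtain ⟨f, hf, hf'⟩ := exists_aeval_derivative_ne_zero_of_isSeparable
    (A := Algebra.adjoin K (algebraMap R F '' S)) hz
  refine ⟨f.map (e.symm : _ →+* Algebra.adjoin K S), hφ ?_, fun h => hf' ?_⟩
  · rw [aeval_map, hf, map_zero]
  · rw [← aeval_map, ← Polynomial.derivative_map, h, map_zero]

lemma algebraMap_mem_adjoin_image {R : Type*} [CommRing R] [Algebra K R] [Algebra R F]
    [IsScalarTower K R F] {S : Set R} {a : R}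
    (ha : a ∈ Algebra.adjoin K S) :
    algebraMap R F a ∈ adjoin K (algebraMap R F '' S) := by
  let φ := IsScalarTower.toAlgHom K R F
  refine algebra_adjoin_le_adjoin K (φ '' S) ?_
  rw [← AlgHom.map_adjoin]
  exact ⟨a, ha, rfl⟩

end SeparatingBasis

section CoefficientField

open IntermediateField IsLocalRing
open scoped IntermediateField.algebraAdjoinAdjoin

lemma linearIndependent_adjoin_singleton_iff {K F κ : Type*} [Field K] [Field F] [Algebra K F]
    {x : F} {v : κ → F} :
    LinearIndependent (Algebra.adjoin K {x}) v ↔ LinearIndependent K⟮x⟯ v :=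
  LinearIndependent.iff_fractionRing _ _

lemma transcendental_of_irreducible {K R : Type*} [Field K] [CommRing R] [IsDomain R]
    [Algebra K R] {t : R} (ht : Irreducible t) : Transcendental K t :=
  fun h => ht.not_isUnit (h.isIntegral.isUnit ht.ne_zero)

variable {K R F : Type*} [Field K] [CommRing R] [IsDomain R] [IsDiscreteValuationRing R]
  [Field F] [Algebra K R] [Algebra R F] [Algebra K F] [IsScalarTower K R F]
  [IsFractionRing R F] {t : R}

lemma linearIndependent_pow_of_irreducible
    (hK : Function.Surjective (algebraMap K (ResidueField R)))
    (ht : Irreducible t) (p : ℕ) [Fact p.Prime] [CharP F p] {κ : Type*} {v : κ → F}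
    (hv : LinearIndependent K⟮algebraMap R F t⟯ v) :
    LinearIndependent K⟮algebraMap R F t⟯ (fun k => v k ^ p) := by
  let A := Algebra.adjoin K {algebraMap R F t}
  have : CharP K p := (algebraMap K F).charP (algebraMap K F).injective p
  have : CharP A p := (algebraMap A F).charP Subtype.val_injective p
  obtain ⟨β, e, he, hspan⟩ := exists_powIndependent_powSpan_eq_top K p
  let x : A := ⟨algebraMap R F t, Algebra.self_mem_adjoin_singleton K _⟩
  let b : Fin p × β → A := fun i => x ^ (i.1 : ℕ) * algebraMap K A (e i.2)
  have hb : powSpan p b = ⊤ := powSpan_pow_mul_algebraMap hspan <| by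
    have preimage_eq : ((↑) : A → F) ⁻¹' {algebraMap R F t} = {x} := by
      ext y
      exact (Subtype.ext_iff (a1 := y) (a2 := x)).symm
    rw [← preimage_eq]
    exact Algebra.adjoin_adjoin_coe_preimage
  have residue_indep : PowIndependent p (residue R ∘ algebraMap K R ∘ e) :=
    he.map_ringEquiv (RingEquiv.ofBijective _ ⟨(algebraMap K (ResidueField R)).injective, hK⟩)
  have hbF : PowIndependent p (algebraMap A F ∘ b) := by
    convert (residue_indep.pow_mul_of_residue ht).algebraMap_isFractionRing (S := F) using 1
    ext i
    simp only [b, x, Function.comp_apply, map_mul, map_pow]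
    rw [← IsScalarTower.algebraMap_apply K R F, ← IsScalarTower.algebraMap_apply K A F]
    rfl
  rw [← linearIndependent_adjoin_singleton_iff] at hv ⊢
  exact linearIndependent_pow_of_powIndependent hb hbF hv

lemma exists_isTranscendenceBasis_isSeparable
    (hK : Function.Surjective (algebraMap K (ResidueField R))) (ht : Irreducible t)
    [Algebra.EssFiniteType K F] :
    ∃ s : Finset F, IsTranscendenceBasis K⟮algebraMap R F t⟯ ((↑) : s → F) ∧
      Algebra.IsSeparable (adjoin K⟮algebraMap R F t⟯ (s : Set F)) F := by
  have : Algebra.EssFiniteType K⟮algebraMap R F t⟯ F := .of_comp K _ F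
  rcases CharP.exists' F with h | ⟨p, hp, h⟩
  · have : CharZero K⟮algebraMap R F t⟯ := (algebraMap _ F).charZero
    exact exists_isTranscendenceBasis_and_isSeparable_of_perfectField _ F
  · have : CharP K⟮algebraMap R F t⟯ p :=
      (algebraMap _ F).charP Subtype.val_injective p
    have : ExpChar K⟮algebraMap R F t⟯ p := .prime hp.out
    exact exists_isTranscendenceBasis_and_isSeparable_of_linearIndepOn_pow_of_essFiniteType p
      hp.out fun s hs => linearIndependent_pow_of_irreducible hK ht p hs

lemma exists_pow_mul_eq_algebraMap (ht : Irreducible t) (x : F) :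
    ∃ (n : ℕ) (a : R), algebraMap R F t ^ n * x = algebraMap R F a := by
  obtain ⟨a, b, hb, rfl⟩ := IsFractionRing.div_surjective R x
  obtain ⟨n, u, rfl⟩ :=
    IsDiscreteValuationRing.eq_unit_mul_pow_irreducible (nonZeroDivisors.ne_zero hb) ht
  have ht0 : algebraMap R F t ≠ 0 := (map_ne_zero_iff _ (IsFractionRing.injective R F)).2 ht.ne_zero
  have hu0 : algebraMap R F u ≠ 0 := (u.isUnit.map _).ne_zero
  refine ⟨n, ↑u⁻¹ * a, ?_⟩
  rw [map_mul, map_mul, map_pow, map_units_inv]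
  field_simp

lemma exists_isSeparatingBasis_cons (hK : Function.Surjective (algebraMap K (ResidueField R)))
    (ht : Irreducible t) [Algebra.EssFiniteType K F] :
    ∃ (d : ℕ) (y : Fin d → R),
      IsSeparatingBasis K (algebraMap R F ∘ (Fin.cons t y : Fin (d + 1) → R)) := by
  obtain ⟨s, hs, hsep⟩ := exists_isTranscendenceBasis_isSeparable (F := F) hK ht
  let v : Fin s.card → F := (↑) ∘ s.equivFin.symm
  have range_v : Set.range v = s := by simp [v, Set.range_comp]
  have hv : IsSeparatingBasis K⟮algebraMap R F t⟯ v :=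
    ⟨hs.1.comp _ s.equivFin.symm.injective, range_v ▸ hsep⟩
  have hτ : Transcendental K (algebraMap R F t) :=
    (transcendental_algebraMap_iff (IsFractionRing.injective R F)).2
      (transcendental_of_irreducible ht)
  choose n y hy using fun i => exists_pow_mul_eq_algebraMap ht (v i)
  refine ⟨s.card, y, (hv.cons hτ).of_forall_mem_adjoin fun i => ?_⟩
  let x : Fin (s.card + 1) → R := Fin.cons t y
  have mem (j) : algebraMap R F (x j) ∈ adjoin K (Set.range (algebraMap R F ∘ x)) :=
    subset_adjoin _ _ ⟨j, rfl⟩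
  cases i using Fin.cases with
  | zero => exact mem 0
  | succ i =>
    have hvi : v i = (algebraMap R F t ^ n i)⁻¹ * algebraMap R F (y i) := by
      rw [← hy, inv_mul_cancel_left₀]
      exact pow_ne_zero _ ((map_ne_zero_iff _ (IsFractionRing.injective R F)).2 ht.ne_zero)
    rw [Fin.cons_succ, hvi]
    exact mul_mem (inv_mem (pow_mem (mem 0) _)) (mem i.succ)

end CoefficientField

section SimpleRoot

open Polynomial

/-- The element `η` of the `A`-algebra `R` is a root of a polynomial over `A` whose derivative takes
a unit value at `η`. If `R` is the valuation ring of a place `P`, this says that `ηP` is a simple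
root of the reduction of that polynomial; the polynomial need not be monic. -/
def IsSimpleRootOver (A : Type*) {R : Type*} [CommRing A] [CommRing R] [Algebra A R] (η : R) :
    Prop :=
  ∃ g : A[X], aeval η g = 0 ∧ IsUnit (aeval η (derivative g))

lemma isSimpleRootOver_of_forall_coeff_mem {K R : Type*} [CommRing K] [CommRing R] [Algebra K R]
    {A : Subalgebra K R} {g : R[X]} {η : R} (hg : ∀ i, g.coeff i ∈ A) (hroot : g.eval η = 0)
    (hunit : IsUnit (g.derivative.eval η)) : IsSimpleRootOver A η := by
  obtain ⟨g, rfl⟩ : ∃ g' : A[X], g'.map (algebraMap A R) = g :=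
    mem_lifts _ |>.1 <| (lifts_iff_coeff_lifts g).2 fun i => ⟨⟨g.coeff i, hg i⟩, rfl⟩
  refine ⟨g, ?_, ?_⟩
  · rwa [← eval_map_algebraMap]
  · rwa [← eval_map_algebraMap, ← derivative_map]

lemma exists_comp_eq_C_sq_mul {R : Type*} [CommRing R] {f : R[X]} {z q c η u : R}
    (hz : z = q + c * η) (hf : f.eval z = 0) (hf' : f.derivative.eval z = c * u) :
    ∃ g : R[X], f.comp (C q + C c * X) = C (c ^ 2) * g ∧ g.eval η = 0 ∧
      g.derivative.eval η = u := by
  obtain ⟨h, hh⟩ := (f.map C).binomExpansion (C z) (C c * (X - C η))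
  have shift : C z + C c * (X - C η) = C q + C c * X := by
    simp only [hz, map_add, map_mul]
    ring
  rw [shift, derivative_map, eval_map_apply, eval_map_apply, hf, hf', eval_map] at hh
  refine ⟨C u * (X - C η) + h * (X - C η) ^ 2, ?_, by simp, by simp [derivative_pow]⟩
  rw [comp, hh]
  simp only [map_zero, map_mul, map_pow]
  ring

end SimpleRoot

section Dilation

open Algebra Polynomial

section

variable {K R ι : Type*} [CommRing K] [CommRing R] [Algebra K R] {t : R}

lemma adjoin_singleton_le_adjoin_insert (s : Set R) : adjoin K {t} ≤ adjoin K (insert t s) :=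
  adjoin_mono (Set.singleton_subset_iff.2 (Set.mem_insert t s))

lemma exists_eq_add_mul_of_mem_adjoin_singleton {x : R} (hx : x ∈ adjoin K {t}) :
    ∃ c : K, ∃ y ∈ adjoin K {t}, x = algebraMap K R c + t * y := by
  rw [adjoin_singleton_eq_range_aeval] at hx
  obtain ⟨f, rfl⟩ := hx
  refine ⟨f.coeff 0, aeval t f.divX, aeval_mem_adjoin_singleton K t, ?_⟩
  have h := congrArg (aeval t) (divX_mul_X_add f)
  rw [map_add, map_mul, aeval_X, aeval_C] at h
  linear_combination -h

lemma exists_eq_add_pow_mul_of_mem_adjoin {y y' q : ι → R} {m : ℕ}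
    (hq : ∀ i, q i ∈ adjoin K {t}) (hy : ∀ i, y i = q i + t ^ m * y' i) {z : R}
    (hz : z ∈ adjoin K (insert t (Set.range y))) :
    ∃ b ∈ adjoin K {t}, ∃ a ∈ adjoin K (insert t (Set.range y')), z = b + t ^ m * a := by
  have hle := adjoin_singleton_le_adjoin_insert (K := K) (t := t) (Set.range y')
  have ht : t ∈ adjoin K {t} := self_mem_adjoin_singleton K t
  induction hz using adjoin_induction with
  | mem z hz =>
    rcases hz with rfl | ⟨i, rfl⟩
    · exact ⟨z, ht, 0, zero_mem _, by ring⟩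
    · exact ⟨q i, hq i, y' i, subset_adjoin (.inr ⟨i, rfl⟩), hy i⟩
  | algebraMap c => exact ⟨_, algebraMap_mem _ c, 0, zero_mem _, by ring⟩
  | add z₁ z₂ _ _ h₁ h₂ =>
    obtain ⟨b₁, hb₁, a₁, ha₁, rfl⟩ := h₁
    obtain ⟨b₂, hb₂, a₂, ha₂, rfl⟩ := h₂
    exact ⟨b₁ + b₂, add_mem hb₁ hb₂, a₁ + a₂, add_mem ha₁ ha₂, by ring⟩
  | mul z₁ z₂ _ _ h₁ h₂ =>
    obtain ⟨b₁, hb₁, a₁, ha₁, rfl⟩ := h₁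
    obtain ⟨b₂, hb₂, a₂, ha₂, rfl⟩ := h₂
    refine ⟨b₁ * b₂, mul_mem hb₁ hb₂, b₁ * a₂ + a₁ * (b₂ + t ^ m * a₂), ?_, by ring⟩
    have hz₂ := add_mem (hle hb₂) (mul_mem (pow_mem (hle ht) m) ha₂)
    exact add_mem (mul_mem (hle hb₁) ha₂) (mul_mem ha₁ hz₂)

end

section

variable {K R ι : Type*} [Field K] [CommRing R] [IsDomain R] [Algebra K R] {t : R}

lemma mem_adjoin_singleton_of_pow_mul_mem (ht : Irreducible t) {n : ℕ} {x : R}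
    (h : t ^ n * x ∈ adjoin K {t}) : x ∈ adjoin K {t} := by
  induction n with
  | zero => simpa using h
  | succ n ih =>
    obtain ⟨c, y, hy, hxy⟩ := exists_eq_add_mul_of_mem_adjoin_singleton h
    have hc : c = 0 := by
      by_contra hc
      refine ht.not_isUnit (isUnit_of_dvd_unit ⟨t ^ n * x - y, ?_⟩
        ((IsUnit.mk0 c hc).map (algebraMap K R)))
      linear_combination -hxy
    rw [hc, map_zero, zero_add, pow_succ', mul_assoc] at hxy
    exact ih (mul_left_cancel₀ ht.ne_zero hxy ▸ hy)

lemma mem_adjoin_insert_of_pow_mul_mem (ht : Irreducible t) {y y' q : ι → R} {m n : ℕ}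
    (hq : ∀ i, q i ∈ adjoin K {t}) (hy : ∀ i, y i = q i + t ^ m * y' i) (hnm : n ≤ m) {x : R}
    (h : t ^ n * x ∈ adjoin K (insert t (Set.range y))) :
    x ∈ adjoin K (insert t (Set.range y')) := by
  have hle := adjoin_singleton_le_adjoin_insert (K := K) (t := t) (Set.range y')
  have ht' : t ∈ adjoin K (insert t (Set.range y')) := hle (self_mem_adjoin_singleton K t)
  obtain ⟨b, hb, a, ha, hx⟩ := exists_eq_add_pow_mul_of_mem_adjoin hq hy h
  obtain ⟨k, rfl⟩ := Nat.exists_eq_add_of_le hnm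
  have hb' : b = t ^ n * (x - t ^ k * a) := by linear_combination -hx
  have hmem := hle (mem_adjoin_singleton_of_pow_mul_mem ht (hb' ▸ hb))
  exact sub_add_cancel x _ ▸ add_mem hmem (mul_mem (pow_mem ht' k) ha)

end

section IsDiscreteValuationRing

variable {K R ι κ : Type*} [Field K] [CommRing R] [IsDomain R] [IsDiscreteValuationRing R]
  [Algebra K R] {t : R}

open IsLocalRing

lemma exists_eq_add_pow_mul (hK : Function.Surjective (algebraMap K (ResidueField R)))
    (ht : Irreducible t) (x : R) (n : ℕ) :
    ∃ q ∈ adjoin K {t}, ∃ y, x = q + t ^ n * y := by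
  induction n with
  | zero => exact ⟨0, zero_mem _, x, by ring⟩
  | succ n ih =>
    obtain ⟨q, hq, y, rfl⟩ := ih
    obtain ⟨c, hc⟩ := hK (residue R y)
    have hmem : y - algebraMap K R c ∈ maximalIdeal R := by
      rw [← residue_eq_zero_iff, map_sub, ← hc]
      exact sub_self _
    rw [ht.maximalIdeal_eq, Ideal.mem_span_singleton] at hmem
    obtain ⟨y', hy'⟩ := hmem
    refine ⟨q + t ^ n * algebraMap K R c, add_mem hq (mul_mem ?_ (algebraMap_mem _ c)), y', ?_⟩
    · exact pow_mem (self_mem_adjoin_singleton K t) n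
    · linear_combination t ^ n * hy'

lemma exists_newton_step (hK : Function.Surjective (algebraMap K (ResidueField R)))
    (ht : Irreducible t) {A : Subalgebra K R} (htA : t ∈ A) {z : R} {f : A[X]}
    (hf : aeval z f = 0) (hf' : aeval z f.derivative ≠ 0) :
    ∃ n, ∃ q ∈ adjoin K {t}, ∃ η, z = q + t ^ n * η ∧
      ∃ g : R[X], (∀ i, t ^ (2 * n) * g.coeff i ∈ A) ∧ g.eval η = 0 ∧
        IsUnit (g.derivative.eval η) := by
  obtain ⟨n, u, hu⟩ := IsDiscreteValuationRing.eq_unit_mul_pow_irreducible hf' ht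
  obtain ⟨q, hq, η, hz⟩ := exists_eq_add_pow_mul hK ht z n
  have hqA : q ∈ A := adjoin_le (Set.singleton_subset_iff.2 htA) hq
  obtain ⟨g, hg, hroot, hunit⟩ := exists_comp_eq_C_sq_mul (f := f.map (algebraMap A R)) (u := u) hz
    (by rwa [eval_map_algebraMap]) (by rw [derivative_map, eval_map_algebraMap, hu, mul_comm])
  refine ⟨n, q, hq, η, hz, g, fun i => ?_, hroot, hunit ▸ u.isUnit⟩
  let shift : A[X] := C ⟨q, hqA⟩ + C (⟨t, htA⟩ ^ n) * X
  have hcoeff : t ^ (2 * n) * g.coeff i = (f.comp shift).coeff i := by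
    calc t ^ (2 * n) * g.coeff i
        = ((f.map (algebraMap A R)).comp (C q + C (t ^ n) * X)).coeff i := by
          rw [hg, coeff_C_mul]
          ring
      _ = ((f.comp shift).map (algebraMap A R)).coeff i := by
          simp [map_comp, shift]
      _ = (f.comp shift).coeff i := coeff_map ..
  exact hcoeff ▸ SetLike.coe_mem _

lemma exists_forall_isSimpleRootOver [Finite κ]
    (hK : Function.Surjective (algebraMap K (ResidueField R))) (ht : Irreducible t) (y : ι → R)
    {z : κ → R} (hz : ∀ k, ∃ f : (adjoin K (insert t (Set.range y)))[X],
      aeval (z k) f = 0 ∧ aeval (z k) (derivative f) ≠ 0) :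
    ∃ (y' : ι → R) (η : κ → R), (∀ i, y i ∈ adjoin K (insert t (Set.range y'))) ∧
      ∀ k, IsSimpleRootOver (adjoin K (insert t (Set.range y'))) (η k) ∧
        z k ∈ adjoin (adjoin K (insert t (Set.range y'))) {η k} := by
  choose f hf hf' using hz
  choose n q hq η hzη g hg hroot hunit using fun k =>
    exists_newton_step hK ht (subset_adjoin (Set.mem_insert t _)) (hf k) (hf' k)
  have := Fintype.ofFinite κ
  let m := Finset.univ.sup fun k => 2 * n k
  have hm (k) : 2 * n k ≤ m := Finset.le_sup (f := fun k => 2 * n k) (Finset.mem_univ k)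
  choose p hp y' hy' using fun i => exists_eq_add_pow_mul hK ht (y i) m
  let A := adjoin K (insert t (Set.range y'))
  have hle : adjoin K {t} ≤ A := adjoin_singleton_le_adjoin_insert _
  have htA : t ∈ A := hle (self_mem_adjoin_singleton K t)
  refine ⟨y', η, fun i => ?_, fun k => ⟨?_, ?_⟩⟩
  · rw [hy' i]
    exact add_mem (hle (hp i)) (mul_mem (pow_mem htA m) (subset_adjoin (.inr ⟨i, rfl⟩)))
  · exact isSimpleRootOver_of_forall_coeff_mem
      (fun i => mem_adjoin_insert_of_pow_mul_mem ht hp hy' (hm k) (hg k i)) (hroot k) (hunit k)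
  · rw [hzη k]
    exact add_mem (algebraMap_mem _ (⟨q k, hle (hq k)⟩ : A))
      (mul_mem (pow_mem (algebraMap_mem _ (⟨t, htA⟩ : A)) _) (self_mem_adjoin_singleton A _))

end IsDiscreteValuationRing

end Dilation

section TriangularSystem

open MvPolynomial

variable {A R : Type*} [CommRing A] [CommRing R] [Algebra A R]

/-- The conditions (U1)-(U3) for the generators `η` and the polynomials `g` over `A`, with (U3)
imposed on the diagonal entries of the Jacobian matrix, which (U1) makes lower triangular. -/
structure IsTriangularSystem {n : ℕ} (η : Fin n → R) (g : Fin n → MvPolynomial (Fin n) A) :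
    Prop where
  degreeOf_eq_zero : ∀ i j, i < j → (g i).degreeOf j = 0
  aeval_eq_zero : ∀ i, aeval η (g i) = 0
  isUnit_aeval_pderiv : ∀ i, IsUnit (aeval η (pderiv i (g i)))

lemma pderiv_eq_zero_of_degreeOf_eq_zero {σ : Type*} {j : σ} {f : MvPolynomial σ A}
    (hf : f.degreeOf j = 0) : pderiv j f = 0 :=
  pderiv_eq_zero_of_notMem_vars fun h => mem_vars_iff_degreeOf_ne_zero.1 h hf

lemma IsTriangularSystem.isUnit_det_jacobian {n : ℕ} {η : Fin n → R}
    {g : Fin n → MvPolynomial (Fin n) A} (h : IsTriangularSystem η g) :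
    IsUnit (Matrix.of fun i j => aeval η (pderiv j (g i))).det := by
  rw [Matrix.det_of_isLowerTriangular _ fun i j hij => by
    rw [Matrix.of_apply, pderiv_eq_zero_of_degreeOf_eq_zero (h.degreeOf_eq_zero i j hij), map_zero]]
  exact IsUnit.prod_univ_iff.2 h.isUnit_aeval_pderiv

lemma degreeOf_rename_eq_zero {σ τ : Type*} {e : σ → τ} {j : τ} (hj : j ∉ Set.range e)
    (f : MvPolynomial σ A) : (rename e f).degreeOf j = 0 := by
  by_contra h
  obtain ⟨i, -, rfl⟩ := mem_vars_rename e f (mem_vars_iff_degreeOf_ne_zero.2 h)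
  exact hj ⟨i, rfl⟩

lemma pderiv_toMvPolynomial_self {σ : Type*} (i : σ) (f : Polynomial A) :
    pderiv i (f.toMvPolynomial i) = f.derivative.toMvPolynomial i := by
  rw [Polynomial.toMvPolynomial, Derivation.map_aeval, pderiv_X_self, smul_eq_mul, mul_one]

lemma degreeOf_toMvPolynomial_of_ne {σ : Type*} {i j : σ} (h : j ≠ i) (f : Polynomial A) :
    (f.toMvPolynomial i).degreeOf j = 0 := by
  rw [Polynomial.toMvPolynomial_eq_rename_comp]
  exact degreeOf_rename_eq_zero (by rintro ⟨_, rfl⟩; exact h rfl) _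

lemma exists_isTriangularSystem_append {r m : ℕ} {η : Fin r → R}
    (hη : ∀ i, IsSimpleRootOver A (η i)) {z : Fin m → R}
    (hz : ∀ k, z k ∈ Algebra.adjoin A (Set.range η)) :
    ∃ g : Fin (r + m) → MvPolynomial (Fin (r + m)) A,
      IsTriangularSystem (Fin.append η z) g := by
  choose f hf hf' using hη
  simp only [Algebra.adjoin_range_eq_range_aeval, AlgHom.mem_range] at hz
  choose P hP using hz
  have notMem {j} (k : Fin m) (h : Fin.natAdd r k ≤ j) : j ∉ Set.range (Fin.castAdd m) := by
    rintro ⟨i, rfl⟩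
    exact i.2.not_ge ((Nat.le_add_right r k).trans h)
  refine ⟨Fin.append (fun i => (f i).toMvPolynomial (Fin.castAdd m i))
    fun k => X (Fin.natAdd r k) - rename (Fin.castAdd m) (P k), ?_, ?_, ?_⟩
  · refine Fin.addCases (fun i j hij => ?_) fun k j hkj => ?_
    · rw [Fin.append_left, degreeOf_toMvPolynomial_of_ne hij.ne']
    · rw [Fin.append_right, ← Nat.le_zero]
      refine (degreeOf_sub_le _ _ _).trans_eq ?_
      rw [degreeOf_X_of_ne hkj.ne', degreeOf_rename_eq_zero (notMem k hkj.le), max_self]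
  · refine Fin.addCases (fun i => ?_) fun k => ?_
    · rw [Fin.append_left, aeval_toMvPolynomial, Fin.append_left, hf]
    · have : Fin.append η z ∘ Fin.castAdd m = η := funext (Fin.append_left η z)
      rw [Fin.append_right, map_sub, aeval_X, aeval_rename, this, hP, Fin.append_right, sub_self]
  · refine Fin.addCases (fun i => ?_) fun k => ?_
    · rw [Fin.append_left, pderiv_toMvPolynomial_self, aeval_toMvPolynomial, Fin.append_left]
      exact hf' i
    · rw [Fin.append_right, map_sub, pderiv_X_self,
        pderiv_eq_zero_of_degreeOf_eq_zero (degreeOf_rename_eq_zero (notMem k le_rfl) _),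
        sub_zero, map_one]
      exact isUnit_one

end TriangularSystem

lemma exists_isSeparatingBasis_isTriangularSystem {K R F : Type*} [Field K] [CommRing R]
    [IsDomain R] [IsDiscreteValuationRing R] [Field F] [Algebra K R] [Algebra R F] [Algebra K F]
    [IsScalarTower K R F] [IsFractionRing R F] [Algebra.EssFiniteType K F] {t : R}
    (hK : Function.Surjective (algebraMap K (IsLocalRing.ResidueField R))) (ht : Irreducible t)
    {m : ℕ} (z : Fin m → R) :
    ∃ (d : ℕ) (x : Fin d → R) (η : Fin m → R)
      (g : Fin (m + m) → MvPolynomial (Fin (m + m)) (Algebra.adjoin K (Set.range x))),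
      IsSeparatingBasis K (algebraMap R F ∘ x) ∧ IsTriangularSystem (Fin.append η z) g := by
  obtain ⟨d, y, hy⟩ := exists_isSeparatingBasis_cons (F := F) hK ht
  have range_cons (y : Fin d → R) :
      Set.range (Fin.cons t y : Fin (d + 1) → R) = insert t (Set.range y) := Fin.range_cons t y
  have hz (k) : ∃ f : Polynomial (Algebra.adjoin K (insert t (Set.range y))),
      Polynomial.aeval (z k) f = 0 ∧ Polynomial.aeval (z k) f.derivative ≠ 0 := by
    refine exists_aeval_adjoin_derivative_ne_zero (F := F) ?_
    rw [← range_cons, ← Set.range_comp]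
    have := hy.2
    exact Algebra.IsSeparable.isSeparable _ _
  obtain ⟨y', η, hyy', hη⟩ := exists_forall_isSimpleRootOver hK ht y hz
  rw [← range_cons] at hyy' hη
  obtain ⟨g, hg⟩ := exists_isTriangularSystem_append (fun k => (hη k).1)
    fun k => Algebra.adjoin_mono (Set.singleton_subset_iff.2 (Set.mem_range_self k)) (hη k).2
  refine ⟨d + 1, Fin.cons t y', η, g, hy.of_forall_mem_adjoin fun i => ?_, hg⟩
  rw [Set.range_comp]
  refine algebraMap_mem_adjoin_image ?_
  cases i using Fin.cases with
  | zero => exact Algebra.subset_adjoin ⟨0, rfl⟩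
  | succ i => exact hyy' i

section RationalDiscretePlace

open IsLocalRing

variable {F : Type*} [Field F] {O : ValuationSubring F} {K : Subfield F}

lemma inMax_coe_iff {a : O} : InMax O (a : F) ↔ a ∈ maximalIdeal O :=
  O.mem_nonunits_iff_or.symm.trans O.coe_mem_nonunits_iff

lemma isVUnit_coe_iff {a : O} : IsVUnit O (a : F) ↔ IsUnit a := by
  rw [← not_iff_not, ← mem_nonunits_iff, ← mem_maximalIdeal, ← inMax_coe_iff]
  simp [IsVUnit, InMax, or_iff_not_imp_left]

lemma exists_associated_pow_of_isVUnit_div_zpow {π a : O} (hπ0 : π ≠ 0) {n : ℤ}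
    (h : IsVUnit O ((a : F) / (π : F) ^ n)) : ∃ k : ℕ, Associated (π ^ k) a := by
  have hπF : (π : F) ≠ 0 := (ZeroMemClass.coe_eq_zero (x := π)).not.2 hπ0
  obtain ⟨u, hu⟩ : IsUnit (⟨_, h.2.1⟩ : O) := isVUnit_coe_iff.1 h
  have hua : (u : F) * (π : F) ^ n = a := by
    rw [hu, div_mul_cancel₀ _ (zpow_ne_zero n hπF)]
  obtain ⟨k, rfl | rfl⟩ := n.eq_nat_or_neg
  · refine ⟨k, u, Subtype.ext ?_⟩
    rw [← hua, mul_comm, MulMemClass.coe_mul, SubmonoidClass.coe_pow, zpow_natCast]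
  · have hak : π ^ k * a = u := Subtype.ext <| by
      rw [MulMemClass.coe_mul, SubmonoidClass.coe_pow, ← hua, zpow_neg, zpow_natCast,
        mul_left_comm, mul_inv_cancel₀ (pow_ne_zero k hπF), mul_one]
    obtain ⟨-, ha⟩ := IsUnit.mul_iff.1 (hak ▸ u.isUnit)
    exact ⟨0, by rw [pow_zero]; exact (associated_one_iff_isUnit.2 ha).symm⟩

lemma exists_irreducible_isDiscreteValuationRing (h : IsDiscrete O) :
    ∃ t : O, Irreducible t ∧ IsDiscreteValuationRing O := by
  obtain ⟨π, hπ0, hπ, hO⟩ := h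
  lift π to O using O.nonunits_subset (O.mem_nonunits_iff_or.2 hπ)
  rw [inMax_coe_iff] at hπ
  have hπ0 : π ≠ 0 := fun h => hπ0 (congrArg Subtype.val h)
  have associated_pow {a : O} (ha : a ≠ 0) : ∃ k : ℕ, Associated (π ^ k) a :=
    exists_associated_pow_of_isVUnit_div_zpow hπ0 (hO a fun h => ha (Subtype.ext h)).choose_spec
  have maximalIdeal_eq : maximalIdeal O = Ideal.span {π} := by
    refine le_antisymm (fun a ha => Ideal.mem_span_singleton.2 ?_)
      ((Ideal.span_singleton_le_iff_mem _).2 hπ)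
    rcases eq_or_ne a 0 with rfl | ha0
    · exact dvd_zero π
    obtain ⟨k, hk⟩ := associated_pow ha0
    have hk0 : k ≠ 0 := by
      rintro rfl
      rw [pow_zero] at hk
      exact ha (hk.isUnit isUnit_one)
    exact (dvd_pow_self π hk0).trans hk.dvd
  have hirr := IsDiscreteValuationRing.irreducible_of_span_eq_maximalIdeal π hπ0 maximalIdeal_eq
  exact ⟨π, hirr, .ofHasUnitMulPowIrreducibleFactorization ⟨π, hirr, associated_pow⟩⟩

lemma surjective_algebraMap_residueField [Algebra K O] [IsScalarTower K O F]
    (h : ResidueEq O K) : Function.Surjective (algebraMap K (ResidueField O)) := by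
  intro x
  obtain ⟨a, rfl⟩ := residue_surjective x
  obtain ⟨c, hc, hac⟩ := h a a.2
  refine ⟨⟨c, hc⟩, ?_⟩
  rw [IsScalarTower.algebraMap_apply K O, ResidueField.algebraMap_eq, eq_comm, ← sub_eq_zero,
    ← map_sub, residue_eq_zero_iff, ← inMax_coe_iff]
  have : ((algebraMap K O ⟨c, hc⟩ : O) : F) = c :=
    (IsScalarTower.algebraMap_apply K O F ⟨c, hc⟩).symm
  rwa [AddSubgroupClass.coe_sub, this]

lemma exists_adjoin_range_coe_eq_top {k : Type*} [Field k] [Algebra k F]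
    [Algebra.EssFiniteType k F] (O : ValuationSubring F) :
    ∃ (n : ℕ) (w : Fin n → O),
      IntermediateField.adjoin k (Set.range ((↑) ∘ w : Fin n → F)) = ⊤ := by
  obtain ⟨S, hS⟩ := IntermediateField.fg_top k F
  have exists_coe_eq_or_inv_eq (x : F) : ∃ a : O, (a : F) = x ∨ (a : F)⁻¹ = x := by
    rcases O.mem_or_inv_mem x with hx | hx
    · exact ⟨⟨x, hx⟩, .inl rfl⟩
    · exact ⟨⟨x⁻¹, hx⟩, .inr (inv_inv x)⟩
  choose a ha using exists_coe_eq_or_inv_eq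
  let w (i : Fin S.card) : O := a (S.equivFin.symm i)
  refine ⟨S.card, w, top_le_iff.1 (hS ▸ IntermediateField.adjoin_le_iff.2 fun x hx => ?_)⟩
  have mem : (a x : F) ∈ IntermediateField.adjoin k (Set.range ((↑) ∘ w : Fin S.card → F)) :=
    IntermediateField.subset_adjoin _ _ ⟨S.equivFin ⟨x, hx⟩, by simp [w]⟩
  rcases ha x with h | h
  · exact h ▸ mem
  · exact h ▸ inv_mem mem

lemma coe_mem_closure_of_mem_adjoin [Algebra K O] [IsScalarTower K O F] {S : Set O} {a : O}
    (ha : a ∈ Algebra.adjoin K S) :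
    (a : F) ∈ Subring.closure ((↑(K.toSubring ⊓ O.toSubring) : Set F) ∪ (↑) '' S) := by
  induction ha using Algebra.adjoin_induction with
  | mem a ha => exact Subring.subset_closure (.inr ⟨a, ha, rfl⟩)
  | algebraMap c =>
    refine Subring.subset_closure (.inl ⟨?_, SetLike.coe_mem _⟩)
    change algebraMap O F (algebraMap K O c) ∈ K
    rw [← IsScalarTower.algebraMap_apply]
    exact c.2
  | add a b _ _ ha hb => exact add_mem ha hb
  | mul a b _ _ ha hb => exact mul_mem ha hb

lemma IsTriangularSystem.unifData [Algebra K O] [IsScalarTower K O F] {d n : ℕ} {x : Fin d → O}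
    (hx : IsTranscendenceBasis K (algebraMap O F ∘ x)) {η : Fin n → O}
    (hη : IntermediateField.adjoin K (Set.range (algebraMap O F ∘ η)) = ⊤)
    {g : Fin n → MvPolynomial (Fin n) (Algebra.adjoin K (Set.range x))}
    (hg : IsTriangularSystem η g) :
    UnifData ⊤ K O (algebraMap O F ∘ x) (algebraMap O F ∘ η) := by
  let φ := algebraMap (Algebra.adjoin K (Set.range x)) F
  have eval_map (f : MvPolynomial (Fin n) (Algebra.adjoin K (Set.range x))) :
      (f.map φ).eval (algebraMap O F ∘ η) = algebraMap O F (f.aeval η) := by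
    rw [MvPolynomial.eval_map, MvPolynomial.aeval_def, MvPolynomial.hom_eval₂]
    rfl
  refine ⟨fun i => ⟨trivial, SetLike.coe_mem _⟩, fun i => ⟨trivial, SetLike.coe_mem _⟩, hx.1,
    fun z _ => hx.isAlgebraic_field.isAlgebraic z, top_le_iff.1 ?_, fun i => (g i).map φ,
    fun i m => ?_, fun i j hij => ?_, fun i => ?_, ?_⟩
  · rw [← IntermediateField.top_toSubfield (F := K), ← hη, IntermediateField.adjoin_toSubfield]
    exact Subfield.closure_mono <| Set.union_subset_union_left _ <| by
      rintro _ ⟨c, rfl⟩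
      exact .inl c.2
  · rw [MvPolynomial.coeff_map, Set.range_comp]
    exact coe_mem_closure_of_mem_adjoin (SetLike.coe_mem _)
  · by_contra h
    exact MvPolynomial.mem_vars_iff_degreeOf_ne_zero.1
      (MvPolynomial.vars_map _ φ (MvPolynomial.mem_vars_iff_degreeOf_ne_zero.2 h))
      (hg.degreeOf_eq_zero i j hij)
  · rw [eval_map, hg.aeval_eq_zero, map_zero]
  · simp only [MvPolynomial.pderiv_map, eval_map]
    have := hg.isUnit_det_jacobian
    rw [← isVUnit_coe_iff] at this
    convert this
    exact ((algebraMap O F).map_det _).symm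

end RationalDiscretePlace

end LocalUnif

open LocalUnif in
/-- Theorem 1.8 of the paper. If `P` is a rational discrete place
of the function field `F|K` (i.e. `FP = K` and `v_P F ≅ ℤ`), then `(F|K, P)` is
uniformizable. -/
theorem statement_6
    (F : Type*) [Field F] (K : Subfield F) (O : ValuationSubring F)
    (hff : IsFunctionField K) (htriv : TrivialOn O K)
    (hrat : ResidueEq O K) (hdisc : IsDiscrete O) :
    UnifIn ⊤ K O := by
  intro m ζ hζ
  let : Algebra K O := (K.subtype.codRestrict O.toSubring fun c => (htriv c c.2).1).toAlgebra
  have : IsScalarTower K O F := .of_algebraMap_eq fun _ => rfl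
  have : Algebra.EssFiniteType K F := IntermediateField.fg_top_iff.1 hff.1
  obtain ⟨t, ht, _⟩ := exists_irreducible_isDiscreteValuationRing hdisc
  obtain ⟨n, w, hw⟩ := exists_adjoin_range_coe_eq_top (k := K) O
  let z : Fin (m + n) → O := Fin.append (fun k => ⟨ζ k, (hζ k).2⟩) w
  obtain ⟨d, x, η, g, hx, hg⟩ := exists_isSeparatingBasis_isTriangularSystem (F := F)
    (surjective_algebraMap_residueField hrat) ht z
  have hgen : IntermediateField.adjoin K (Set.range (algebraMap O F ∘ Fin.append η z)) = ⊤ := by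
    refine top_le_iff.1 (hw.ge.trans (IntermediateField.adjoin.mono _ _ _ ?_))
    rintro _ ⟨k, rfl⟩
    exact ⟨Fin.natAdd _ (Fin.natAdd m k), congrArg Subtype.val
      ((Fin.append_right _ _ _).trans (Fin.append_right _ _ _))⟩
  refine ⟨d, _, _, _, hg.unifData hx.isTranscendenceBasis hgen,
    fun k => Fin.natAdd _ (Fin.castAdd n k), fun k => ?_⟩
  exact congrArg Subtype.val ((Fin.append_right _ _ _).trans (Fin.append_left _ _ _))
end

section
/- Let (L|K,P) be an extension of valued fields of finite transcendence degree. Then trdeg L|K ≥ trdeg LP|KP + dim_ℚ(ℚ ⊗_ℤ (v_PL/v_PK)). If moreover L|K is a finitely generated field extension and equality holds, then the group v_PL/v_PK and the field extension LP|KP are finitely generated; in particular, if P is trivial on K, then v_PL is a finitely generated free abelian group (a direct sum of finitely many copies of ℤ) and LP is a finitely generated field extension of K. -/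
/-!
Let the `x i` have rationally independent values modulo `v_P K`, and let the `y j` have residues
algebraically independent over `KP`. A nonzero polynomial in `y` over `K`, divided by a coefficient
of largest valuation, is a unit with residue in `KP(yP)`; so passing from `K` to `K(y)` does not
change the value group. Over `K(y)`, distinct monomials in `x` still have distinct values, so a
nonzero polynomial in `x` is its dominant term times a unit of residue `1`. Altogether,
`K(x, y)ˣ ⊆ Kˣ · ⟨x⟩ · {units with residue in KP(yP)}`.

Hence `x, y` are algebraically independent over `K`, `v_P K(x, y)` is generated by `v_P K` and the
values of `x`, and `K(x, y)P = KP(yP)`. In the case of equality `L | K(x, y)` is finite, so the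
index of `v_P K(x, y)` in `v_P L` and the degree of `LP | K(x, y)P` are finite as well.
-/

namespace LocalUnif

open IsLocalRing MvPolynomial

section Valuation

theorem exists_map_sum_sub_lt {R Γ ι : Type*} [Ring R] [LinearOrderedCommMonoidWithZero Γ]
    (v : Valuation R Γ) {s : Finset ι} {t : ι → R} (hs : s.Nonempty) (ht : ∀ i ∈ s, v (t i) ≠ 0)
    (hinj : Set.InjOn (fun i => v (t i)) s) :
    ∃ j ∈ s, v (∑ i ∈ s, t i - t j) < v (t j) := by
  classical
  obtain ⟨j, hj, hmax⟩ := s.exists_max_image (fun i => v (t i)) hs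
  refine ⟨j, hj, ?_⟩
  rw [← Finset.sum_erase_eq_sub hj]
  refine v.map_sum_lt (ht j hj) fun i hi => ?_
  obtain ⟨hij, hi⟩ := Finset.mem_erase.1 hi
  exact (hmax i hi).lt_of_ne fun h => hij (hinj hi hj h)

variable {K : Type*} [Field K] (A : ValuationSubring K)

theorem exists_forall_div_mem {ι : Type*} {s : Finset ι} {g : ι → K} (hg : ∃ i ∈ s, g i ≠ 0) :
    ∃ j ∈ s, g j ≠ 0 ∧ ∀ i ∈ s, g i / g j ∈ A := by
  obtain ⟨i₀, hi₀, hne⟩ := hg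
  obtain ⟨j, hj, hmax⟩ := s.exists_max_image (fun i => A.valuation (g i)) ⟨i₀, hi₀⟩
  have hpos : 0 < A.valuation (g j) :=
    (zero_lt_iff.2 ((map_ne_zero _).2 hne)).trans_le (hmax i₀ hi₀)
  refine ⟨j, hj, (map_ne_zero _).1 hpos.ne', fun i hi => ?_⟩
  rw [← A.valuation_le_one_iff, map_div₀]
  exact div_le_one_of_le₀ (hmax i hi) zero_le

theorem exists_eq_C_mul_map_subtype {κ : Type*} {p : MvPolynomial κ K} (hp : p ≠ 0) :
    ∃ (c : Kˣ) (q : MvPolynomial κ A) (m : κ →₀ ℕ),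
      p = C (c : K) * map A.subtype q ∧ coeff m q = 1 := by
  obtain ⟨m₀, hm₀⟩ := ne_zero_iff.1 hp
  obtain ⟨m, -, hm, hdiv⟩ :=
    exists_forall_div_mem A (s := p.support) (g := fun n => coeff n p)
      ⟨m₀, mem_support_iff.2 hm₀, hm₀⟩
  have hmem : C (coeff m p)⁻¹ * p ∈ (map (σ := κ) A.subtype).range := by
    refine mem_range_map_iff_coeffs_subset.2 fun a ha => ?_
    obtain ⟨n, -, rfl⟩ := mem_coeffs_iff.1 ha
    by_cases hn : n ∈ p.support
    · exact ⟨⟨_, hdiv n hn⟩, by simp [div_eq_inv_mul]⟩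
    · exact ⟨0, by simp [notMem_support_iff.1 hn]⟩
  obtain ⟨q, hq⟩ := hmem
  refine ⟨Units.mk0 _ hm, q, m, ?_, A.subtype_injective ?_⟩
  · rw [hq, Units.val_mk0, ← mul_assoc, ← C_mul, mul_inv_cancel₀ hm, C_1, one_mul]
  · rw [← coeff_map, hq, coeff_C_mul, inv_mul_cancel₀ hm, map_one]

end Valuation

section GroundField

variable (K L : Type*) [Field K] [Field L] [Algebra K L] (O : ValuationSubring L)

/-- The image of `Kˣ` in `Lˣ`. -/
noncomputable def groundUnits : Subgroup Lˣ := (Units.map (algebraMap K L : K →* L)).range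

variable {L}

/-- The preimage in `Lˣ` of the value group `v_P K ⊆ v_P L`, so that
`Lˣ ⧸ valueUnits K O` is `v_P L / v_P K`. -/
noncomputable def valueUnits : Subgroup Lˣ := groundUnits K L ⊔ O.unitGroup

/-- The inclusion of valuation rings `𝓞_K → 𝓞_L`, where `𝓞_K = K ∩ 𝓞_L`. -/
def integersMap : O.comap (algebraMap K L) →+* O :=
  (algebraMap K L).restrict _ _ fun _ h => h

@[simp]
theorem coe_integersMap (a : O.comap (algebraMap K L)) :
    (integersMap K O a : L) = algebraMap K L a := rfl

instance : IsLocalHom (integersMap K O) where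
  map_nonunit a ha := by
    have hne : (a : K) ≠ 0 := fun h => ha.ne_zero (by rw [show a = 0 from Subtype.ext h, map_zero])
    have hinv : (a : K)⁻¹ ∈ O.comap (algebraMap K L) := by
      obtain ⟨b, hb⟩ := ha.exists_right_inv
      have hb' : algebraMap K L a * b = 1 := congrArg Subtype.val hb
      rw [ValuationSubring.mem_comap, map_inv₀, inv_eq_of_mul_eq_one_right hb']
      exact b.2
    exact .of_mul_eq_one ⟨_, hinv⟩ (Subtype.ext (mul_inv_cancel₀ hne))

/-- The residue field `KP`, as a subfield of `LP`. -/
noncomputable def residueSubfield : Subfield (ResidueField O) :=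
  (ResidueField.map (integersMap K O)).fieldRange

/-- The residue map `𝓞_K → KP`. -/
noncomputable def residueMap : O.comap (algebraMap K L) →+* residueSubfield K O :=
  (ResidueField.map (integersMap K O)).rangeRestrictField.comp (residue _)

theorem residueMap_surjective : Function.Surjective (residueMap K O) :=
  (RingHom.rangeRestrictField_bijective _).surjective.comp residue_surjective

/-- The units of the valuation ring `O` whose residue lies in `k`. -/
noncomputable def residueUnits (k : Subfield (ResidueField O)) : Subgroup Lˣ :=
  (k.toSubmonoid.units.comap (Units.map (residue O : O →* ResidueField O))).map
    (Units.map (O.subtype : O →* L))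

variable {K O}

theorem mem_residueSubfield {r : ResidueField O} :
    r ∈ residueSubfield K O ↔ ∃ a, residue O (integersMap K O a) = r :=
  ⟨fun hr => (residueMap_surjective K O ⟨r, hr⟩).imp fun _ ha => congrArg Subtype.val ha,
    fun ⟨a, ha⟩ => ha ▸ (residueMap K O a).2⟩

variable {k k' : Subfield (ResidueField O)} {z : Lˣ}

theorem mem_residueUnits :
    z ∈ residueUnits O k ↔ ∃ a : O, (a : L) = z ∧ residue O a ∈ k ∧ residue O a ≠ 0 := by
  constructor
  · rintro ⟨u, hu, rfl⟩
    exact ⟨u, rfl, hu.1, (u.isUnit.map (residue O)).ne_zero⟩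
  · rintro ⟨a, ha, hak, ha0⟩
    obtain ⟨u, rfl⟩ := (residue_ne_zero_iff_isUnit a).1 ha0
    exact ⟨u, ⟨hak, by simpa using k.inv_mem hak⟩, Units.ext ha⟩

theorem residueUnits_mono (h : k ≤ k') : residueUnits O k ≤ residueUnits O k' := fun _ hz =>
  have ⟨a, ha, hak, ha0⟩ := mem_residueUnits.1 hz
  mem_residueUnits.2 ⟨a, ha, h hak, ha0⟩

theorem mem_unitGroup_iff_exists : z ∈ O.unitGroup ↔ ∃ a : Oˣ, (a : L) = z :=
  ⟨fun hz => ⟨O.unitGroupMulEquiv ⟨z, hz⟩, rfl⟩,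
    fun ⟨a, ha⟩ => by rw [O.mem_unitGroup_iff, ← ha, O.valuation_unit]⟩

theorem residueUnits_le_unitGroup : residueUnits O k ≤ O.unitGroup := by
  rintro _ ⟨u, -, rfl⟩
  exact mem_unitGroup_iff_exists.2 ⟨u, rfl⟩

theorem mem_residueUnits_of_valuation_sub_one_lt (h : O.valuation (z - 1) < 1) :
    z ∈ residueUnits O k := by
  obtain ⟨a, ha⟩ : ∃ a : O, (a : L) = z - 1 :=
    ⟨⟨_, (O.valuation_le_one_iff _).1 h.le⟩, rfl⟩
  have hres : residue O (a + 1) = 1 := by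
    rw [map_add, map_one, (residue_eq_zero_iff a).2 ((O.valuation_lt_one_iff a).2 (ha ▸ h)),
      zero_add]
  exact mem_residueUnits.2 ⟨a + 1, by simp [ha], hres ▸ one_mem k, hres ▸ one_ne_zero⟩

theorem groundUnits_inf_unitGroup_le :
    groundUnits K L ⊓ O.unitGroup ≤ residueUnits O (residueSubfield K O) := by
  rintro _ ⟨⟨c, rfl⟩, hc⟩
  obtain ⟨a, ha⟩ := mem_unitGroup_iff_exists.1 hc
  have hcO : algebraMap K L c ∈ O := by
    rw [← show (a : L) = algebraMap K L c from ha]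
    exact a.1.2
  exact mem_residueUnits.2 ⟨a, ha, mem_residueSubfield.2
    ⟨⟨c, hcO⟩, congrArg (residue O) (Subtype.ext ha.symm)⟩, (a.isUnit.map (residue O)).ne_zero⟩

theorem residueSubfield_le (h : groundUnits K L ⊓ O.unitGroup ≤ residueUnits O k) :
    residueSubfield K O ≤ k := by
  intro r hr
  obtain ⟨a, rfl⟩ := mem_residueSubfield.1 hr
  by_cases h0 : residue O (integersMap K O a) = 0
  · exact h0 ▸ zero_mem k
  obtain ⟨u, hu⟩ := (residue_ne_zero_iff_isUnit _).1 h0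
  have hu' : (u : L) = algebraMap K L a := congrArg Subtype.val hu
  have hne : (a : K) ≠ 0 := fun h => h0 (by rw [show a = 0 from Subtype.ext h, map_zero, map_zero])
  obtain ⟨b, hb, hbk, -⟩ := mem_residueUnits.1 <|
    h ⟨⟨Units.mk0 a hne, rfl⟩, mem_unitGroup_iff_exists.2 ⟨u, hu'⟩⟩
  exact (show b = integersMap K O a from Subtype.ext hb) ▸ hbk

theorem mem_valueUnits :
    z ∈ valueUnits K O ↔ ∃ c : Kˣ, O.valuation z = O.valuation (algebraMap K L c) := by
  constructor
  · intro hz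
    obtain ⟨_, ⟨c, rfl⟩, u, hu, rfl⟩ := Subgroup.mem_sup.1 hz
    exact ⟨c, by simp [(O.mem_unitGroup_iff u).1 hu]⟩
  · rintro ⟨c, hc⟩
    rw [← mul_div_cancel (Units.map (algebraMap K L : K →* L) c) z]
    exact Subgroup.mul_mem_sup ⟨c, rfl⟩ ((O.mem_unitGroup_iff _).2 (by simp [hc]))

variable {F : Type*} [Field F] [Algebra F L]

/- By the modular law, a unit `c * w * u` of `O` with `c ∈ Kˣ`, `w ∈ W` and `u` as in
`residueUnits O k` has `w = 1`, and then `c` is itself a unit of `O`. -/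
theorem residueSubfield_le_of_groundUnits_le {W : Subgroup Lˣ} (hW : Disjoint W (valueUnits K O))
    (hk : residueSubfield K O ≤ k)
    (hF : groundUnits F L ≤ groundUnits K L ⊔ W ⊔ residueUnits O k) :
    residueSubfield F O ≤ k := by
  refine residueSubfield_le ?_
  rintro z ⟨hzF, hz⟩
  obtain ⟨_, hcw, u, hu, rfl⟩ := Subgroup.mem_sup.1 (hF hzF)
  obtain ⟨c, hc, w, hw, rfl⟩ := Subgroup.mem_sup.1 hcw
  have hcwO : c * w ∈ O.unitGroup :=
    (Subgroup.mul_mem_cancel_right _ (residueUnits_le_unitGroup hu)).1 hz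
  have hw1 : w = 1 := by
    refine Subgroup.disjoint_def.1 hW hw ?_
    rw [← inv_mul_cancel_left c w]
    exact Subgroup.mul_mem_sup (inv_mem hc) hcwO
  subst hw1
  rw [mul_one] at hcwO ⊢
  exact mul_mem (residueUnits_mono hk (groundUnits_inf_unitGroup_le ⟨hc, hcwO⟩)) hu

end GroundField

section Adjoin

variable {K L ι : Type*} [Field K] [Field L] [Algebra K L] {H : Subgroup Lˣ} {x : ι → L}

theorem algebraicIndependent_of_aeval_mem
    (h : ∀ p : MvPolynomial ι K, p ≠ 0 → ∃ u ∈ H, (u : L) = aeval x p) :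
    AlgebraicIndependent K x := by
  refine (injective_iff_map_eq_zero _).2 fun p hp => by_contra fun hne => ?_
  obtain ⟨u, -, hu⟩ := h p hne
  exact u.ne_zero (hu.trans hp)

theorem groundUnits_adjoin_le_of_aeval_mem
    (h : ∀ p : MvPolynomial ι K, p ≠ 0 → ∃ u ∈ H, (u : L) = aeval x p) :
    groundUnits (IntermediateField.adjoin K (Set.range x)) L ≤ H := by
  rintro _ ⟨c, rfl⟩
  obtain ⟨r, s, hrs⟩ := (IntermediateField.mem_adjoin_range_iff _ _ _).1 c.1.2
  have hc : aeval x r / aeval x s ≠ 0 := by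
    rw [← hrs]
    exact_mod_cast c.ne_zero
  obtain ⟨hr, hs⟩ := div_ne_zero_iff.1 hc
  obtain ⟨u, hu, hur⟩ := h r (by rintro rfl; simp at hr)
  obtain ⟨w, hw, hws⟩ := h s (by rintro rfl; simp at hs)
  convert div_mem hu hw
  ext
  simp [hur, hws, ← hrs]

end Adjoin

section Residue

variable {K L κ : Type*} [Field K] [Field L] [Algebra K L] {O : ValuationSubring L}

theorem coe_eval₂_integersMap (y : κ → O) (q : MvPolynomial κ (O.comap (algebraMap K L))) :
    ((eval₂ (integersMap K O) y q : O) : L) =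
      aeval (fun i => (y i : L)) (map (O.comap (algebraMap K L)).subtype q) := by
  rw [aeval_def, eval₂_map]
  exact eval₂_comp_left O.subtype _ _ _

theorem residue_eval₂_integersMap (y : κ → O) (q : MvPolynomial κ (O.comap (algebraMap K L))) :
    residue O (eval₂ (integersMap K O) y q) =
      aeval (fun i => residue O (y i)) (map (residueMap K O) q) := by
  rw [aeval_def, eval₂_map]
  exact eval₂_comp_left (residue O) _ _ _

theorem exists_mem_residueUnits_aeval {y : κ → O}
    (hy : AlgebraicIndependent (residueSubfield K O) fun i => residue O (y i))
    {p : MvPolynomial κ K} (hp : p ≠ 0) :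
    ∃ u ∈ groundUnits K L ⊔ residueUnits O (IntermediateField.adjoin (residueSubfield K O)
      (Set.range fun i => residue O (y i))).toSubfield, (u : L) = aeval (fun i => (y i : L)) p := by
  obtain ⟨c, q, m, rfl, hm⟩ := exists_eq_C_mul_map_subtype (O.comap (algebraMap K L)) hp
  set w := eval₂ (integersMap K O) y q
  have hres := residue_eval₂_integersMap y q
  have hw0 : residue O w ≠ 0 := by
    rw [hres]
    intro h
    have h0 := congrArg (coeff m) (hy.eq_zero_of_aeval_eq_zero _ h)
    rw [coeff_map, hm, map_one, coeff_zero] at h0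
    exact one_ne_zero h0
  obtain ⟨u, hu⟩ := (residue_ne_zero_iff_isUnit w).1 hw0
  refine ⟨Units.map (algebraMap K L : K →* L) c * Units.map (O.subtype : O →* L) u,
    Subgroup.mul_mem_sup ⟨c, rfl⟩
      (mem_residueUnits.2 ⟨w, congrArg Subtype.val hu.symm, ?_, hw0⟩), ?_⟩
  · rw [hres]
    refine IntermediateField.algebra_adjoin_le_adjoin _ _ ?_
    rw [Algebra.adjoin_range_eq_range_aeval]
    exact ⟨_, rfl⟩
  · simp [hu, ← coe_eval₂_integersMap, w]

end Residue

section Value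

variable {K L ι : Type*} [Field K] [Field L] [Algebra K L] {O : ValuationSubring L} {x : ι → Lˣ}

variable (K O x) in
/-- The values `v_P (x i)` are `ℤ`-linearly independent modulo `v_P K`. -/
def ValueIndependent : Prop :=
  ∀ e : ι →₀ ℤ, (e.prod fun i n => x i ^ n) ∈ valueUnits K O → e = 0

theorem ValueIndependent.mono {K' : Type*} [Field K'] [Algebra K' L] (hx : ValueIndependent K O x)
    (h : valueUnits K' O ≤ valueUnits K O) : ValueIndependent K' O x :=
  fun e he => hx e (h he)

theorem ValueIndependent.disjoint_closure (hx : ValueIndependent K O x) :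
    Disjoint (Subgroup.closure (Set.range x)) (valueUnits K O) := by
  refine Subgroup.disjoint_def.2 fun {z} hz hzK => ?_
  obtain ⟨e, rfl⟩ := Subgroup.mem_closure_range_iff.1 hz
  rw [hx e hzK, Finsupp.prod_zero_index]

theorem ValueIndependent.eq_of_prod_pow_div_mem (hx : ValueIndependent K O x) {m n : ι →₀ ℕ}
    (h : ((m.prod fun i k => x i ^ k) / n.prod fun i k => x i ^ k) ∈ valueUnits K O) : m = n := by
  have hcast : ∀ m : ι →₀ ℕ, (m.prod fun i k => x i ^ k) =
      (m.mapRange ((↑) : ℕ → ℤ) rfl).prod fun i k => x i ^ k := fun m => by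
    rw [Finsupp.prod_mapRange_index fun _ => zpow_zero _]
    simp only [zpow_natCast]
  have h0 : m.mapRange ((↑) : ℕ → ℤ) rfl - n.mapRange ((↑) : ℕ → ℤ) rfl = 0 := by
    refine hx _ ?_
    rw [hcast m, hcast n, div_eq_mul_inv] at h
    rw [sub_eq_add_neg, Finsupp.prod_add_index' (fun _ => zpow_zero _) fun _ => zpow_add _,
      Finsupp.prod_neg_index fun _ => zpow_zero _]
    simpa only [zpow_neg, Finsupp.prod_inv] using h
  exact Finsupp.mapRange_injective _ rfl Nat.cast_injective (sub_eq_zero.1 h0)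

theorem div_mem_valueUnits_of_valuation_eq {a b : Kˣ} {z w : Lˣ}
    (h : O.valuation (algebraMap K L a * z) = O.valuation (algebraMap K L b * w)) :
    z / w ∈ valueUnits K O := by
  refine mem_valueUnits.2 ⟨b / a, ?_⟩
  rw [map_mul, map_mul] at h
  have ha : O.valuation (algebraMap K L a) ≠ 0 := by simp
  rw [Units.val_div_eq_div_val, Units.val_div_eq_div_val, map_div₀, map_div₀, map_div₀,
    div_eq_div_iff (by simp) ha, mul_comm, h]

/- Distinct monomials in the `x i` have distinct values, so one term dominates the others. -/
theorem ValueIndependent.exists_mem_residueUnits_aeval (hx : ValueIndependent K O x)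
    (k : Subfield (ResidueField O)) {p : MvPolynomial ι K} (hp : p ≠ 0) :
    ∃ u ∈ groundUnits K L ⊔ Subgroup.closure (Set.range x) ⊔ residueUnits O k,
      (u : L) = aeval (fun i => (x i : L)) p := by
  let t : (ι →₀ ℕ) → L := fun m => algebraMap K L (coeff m p) * (m.prod fun i n => x i ^ n : Lˣ)
  have hsum : aeval (fun i => (x i : L)) p = ∑ m ∈ p.support, t m := by
    simp [t, aeval_def, eval₂_eq, Finsupp.prod]
  have ht : ∀ m ∈ p.support, t m ≠ 0 := fun m hm =>
    mul_ne_zero ((map_ne_zero _).2 (mem_support_iff.1 hm)) (Units.ne_zero _)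
  have hinj : Set.InjOn (fun m => O.valuation (t m)) p.support := fun m hm n hn hmn =>
    hx.eq_of_prod_pow_div_mem <| div_mem_valueUnits_of_valuation_eq
      (a := Units.mk0 _ (mem_support_iff.1 hm)) (b := Units.mk0 _ (mem_support_iff.1 hn)) hmn
  obtain ⟨m, hm, hlt⟩ := exists_map_sum_sub_lt O.valuation (support_nonempty.2 hp)
    (fun m hm => (map_ne_zero _).2 (ht m hm)) hinj
  rw [← hsum] at hlt
  let c := Units.map (algebraMap K L : K →* L) (Units.mk0 _ (mem_support_iff.1 hm))
  have hc : c ∈ groundUnits K L := ⟨_, rfl⟩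
  let w : Lˣ := m.prod fun i n => x i ^ n
  have hne : aeval (fun i => (x i : L)) p ≠ 0 := fun h0 => by simp [h0] at hlt
  have hw : w ∈ Subgroup.closure (Set.range x) :=
    prod_mem fun i _ => pow_mem (Subgroup.subset_closure (Set.mem_range_self i)) _
  have hone : O.valuation ((Units.mk0 _ hne / (c * w) : Lˣ) - 1) < 1 := by
    have htm : ((c * w : Lˣ) : L) = t m := rfl
    rw [Units.val_div_eq_div_val, htm, Units.val_mk0, div_sub_one (ht m hm), map_div₀]
    exact (div_lt_one₀ (zero_lt_iff.2 ((map_ne_zero _).2 (ht m hm)))).2 hlt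
  exact ⟨c * w * (Units.mk0 _ hne / (c * w)), Subgroup.mul_mem_sup (Subgroup.mul_mem_sup hc hw)
    (mem_residueUnits_of_valuation_sub_one_lt hone), by simp⟩

end Value

section Finite

variable {F L ι : Type*} [Field F] [Field L] [Algebra F L] {O : ValuationSubring L}

theorem linearIndependent_of_injective_mk {r : ι → Lˣ}
    (hr : Function.Injective fun i => (r i : Lˣ ⧸ valueUnits F O)) :
    LinearIndependent F fun i => (r i : L) := by
  classical
  refine linearIndependent_iff'.2 fun s g hsum i hi => by_contra fun hgi => ?_
  have hg : ∀ j ∈ s.filter (g · ≠ 0), g j ≠ 0 := fun j hj => (Finset.mem_filter.1 hj).2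
  have ht : ∀ j ∈ s.filter (g · ≠ 0), O.valuation (g j • (r j : L)) ≠ 0 := fun j hj =>
    (map_ne_zero _).2 (smul_ne_zero (hg j hj) (r j).ne_zero)
  have hinj : Set.InjOn (fun j => O.valuation (g j • (r j : L))) (s.filter (g · ≠ 0)) := by
    intro j hj l hl hjl
    simp only [Algebra.smul_def] at hjl
    exact (hr (QuotientGroup.eq.2 (by
      rw [← div_eq_inv_mul]
      exact div_mem_valueUnits_of_valuation_eq (a := Units.mk0 _ (hg l hl))
        (b := Units.mk0 _ (hg j hj)) hjl.symm)))
  obtain ⟨j, -, hlt⟩ := exists_map_sum_sub_lt O.valuation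
    ⟨i, Finset.mem_filter.2 ⟨hi, hgi⟩⟩ ht hinj
  have hzero : ∑ j ∈ s with g j ≠ 0, g j • (r j : L) = 0 := by
    rw [← hsum]
    exact Finset.sum_filter_of_ne fun _ _ => left_ne_zero_of_smul
  simp [hzero] at hlt

instance finite_quotient_valueUnits [FiniteDimensional F L] : Finite (Lˣ ⧸ valueUnits F O) :=
  (linearIndependent_of_injective_mk (F := F) (O := O) (r := Quotient.out)
    fun q q' h => by simpa using h).finite

theorem linearIndependent_of_linearIndependent_residue {b : ι → O}
    (hb : LinearIndependent (residueSubfield F O) fun i => residue O (b i)) :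
    LinearIndependent F fun i => (b i : L) := by
  refine linearIndependent_iff''.2 fun s g hgs hsum i => by_contra fun hgi => ?_
  obtain ⟨j, hj, hgj, hdiv⟩ := exists_forall_div_mem (O.comap (algebraMap F L)) (s := s) (g := g)
    ⟨i, by_contra fun his => hgi (hgs i his), hgi⟩
  have hdiv' : ∀ i, g i / g j ∈ O.comap (algebraMap F L) := fun i => by
    by_cases his : i ∈ s
    · exact hdiv i his
    · rw [hgs i his, zero_div]
      exact zero_mem _
  let a : ι → O.comap (algebraMap F L) := fun i => ⟨g i / g j, hdiv' i⟩
  have hsumO : ∑ i ∈ s, integersMap F O (a i) * b i = 0 := by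
    refine O.subtype_injective ?_
    calc O.subtype (∑ i ∈ s, integersMap F O (a i) * b i)
        = (algebraMap F L (g j))⁻¹ * ∑ i ∈ s, g i • (b i : L) := by
          simp [a, Finset.mul_sum, Algebra.smul_def, div_eq_inv_mul, mul_assoc]
      _ = O.subtype 0 := by rw [hsum, mul_zero, map_zero]
  have hsumP : ∑ i ∈ s, residueMap F O (a i) • residue O (b i) = 0 := by
    have h := congrArg (residue O) hsumO
    simp only [map_sum, map_mul, map_zero] at h
    exact h
  have haj : a j = 1 := Subtype.ext (div_self hgj)
  have h0 := linearIndependent_iff'.1 hb s _ hsumP j hj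
  rw [haj, map_one] at h0
  exact one_ne_zero h0

instance finiteDimensional_residueField [FiniteDimensional F L] :
    FiniteDimensional (residueSubfield F O) (ResidueField O) := by
  let b := Module.Basis.ofVectorSpace (residueSubfield F O) (ResidueField O)
  choose c hc using fun i => residue_surjective (b i)
  have hli : LinearIndependent F fun i => (c i : L) :=
    linearIndependent_of_linearIndependent_residue (by simpa only [hc] using b.linearIndependent)
  have := hli.finite
  exact .of_basis b

end Finite

section CommGroup

variable {G : Type*} [CommGroup G] {H N : Subgroup G}

theorem fg_quotient_of_le_sup_closure [Finite (G ⧸ N)] {S : Set G} (hS : S.Finite)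
    (hN : N ≤ H ⊔ Subgroup.closure S) : Group.FG (G ⧸ H) := by
  let T : Set G := S ∪ Set.range fun q : G ⧸ N => q.out
  have hT : H ⊔ Subgroup.closure T = ⊤ := by
    refine eq_top_iff.2 fun z _ => ?_
    have hout : (z : G ⧸ N).out ∈ H ⊔ Subgroup.closure T :=
      le_sup_right (a := H) (Subgroup.subset_closure (Or.inr ⟨_, rfl⟩))
    have hdiv : (z : G ⧸ N).out⁻¹ * z ∈ H ⊔ Subgroup.closure T :=
      sup_le_sup_left (Subgroup.closure_mono Set.subset_union_left) H
        (hN (QuotientGroup.eq.1 (QuotientGroup.out_eq' _)))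
    exact mul_inv_cancel_left (z : G ⧸ N).out z ▸ mul_mem hout hdiv
  refine Group.fg_iff.2 ⟨QuotientGroup.mk' H '' T, ?_, (hS.union (Set.finite_range _)).image _⟩
  rw [← MonoidHom.map_closure, eq_top_iff, ← Subgroup.map_top_of_surjective _
    (QuotientGroup.mk'_surjective H), ← hT, Subgroup.map_sup, QuotientGroup.map_mk'_self,
    bot_sup_eq]

theorem sum_zsmul_ofMul_mk {ι : Type*} [Fintype ι] (a : ι → G) (e : ι → ℤ) :
    ∑ i, e i • Additive.ofMul (a i : G ⧸ H) =
      Additive.ofMul ((∏ i, a i ^ e i : G) : G ⧸ H) := by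
  simp [ofMul_prod, QuotientGroup.mk_prod]

theorem exists_div_prod_zpow_mem_of_span_eq_top {ι : Type*} [Fintype ι] {a : ι → G}
    (ha : Submodule.span ℤ (Set.range fun i => Additive.ofMul (a i : G ⧸ H)) = ⊤) (z : G) :
    ∃ e : ι → ℤ, z / ∏ i, a i ^ e i ∈ H := by
  obtain ⟨e, he⟩ := (Submodule.mem_span_range_iff_exists_fun ℤ).1
    (ha ▸ Submodule.mem_top (x := Additive.ofMul (z : G ⧸ H)))
  rw [sum_zsmul_ofMul_mk] at he
  exact ⟨e, div_eq_inv_mul z _ ▸ QuotientGroup.eq.1 (Additive.ofMul.injective he)⟩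

theorem exists_generators_of_fg_quotient [Group.FG (G ⧸ H)] :
    ∃ (n : ℕ) (a : Fin n → G), ∀ z, ∃ e : Fin n → ℤ, z / ∏ i, a i ^ e i ∈ H := by
  obtain ⟨n, s, hs⟩ := Module.Finite.exists_fin (R := ℤ) (M := Additive (G ⧸ H))
  choose a ha using fun i => QuotientGroup.mk_surjective (s i).toMul
  obtain rfl : (fun i => Additive.ofMul (a i : G ⧸ H)) = s := funext fun i => congrArg _ (ha i)
  exact ⟨n, a, exists_div_prod_zpow_mem_of_span_eq_top hs⟩

theorem exists_basis_of_fg_quotient [Group.FG (G ⧸ H)] [IsMulTorsionFree (G ⧸ H)] :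
    ∃ (n : ℕ) (a : Fin n → G), (∀ z, ∃ e : Fin n → ℤ, z / ∏ i, a i ^ e i ∈ H) ∧
      ∀ e : Fin n → ℤ, ∏ i, a i ^ e i ∈ H → e = 0 := by
  have : Module.Free ℤ (Additive (G ⧸ H)) := Module.free_of_finite_type_torsion_free'
  let b := Module.finBasis ℤ (Additive (G ⧸ H))
  choose a ha using fun i => QuotientGroup.mk_surjective (b i).toMul
  have hab : (fun i => Additive.ofMul (a i : G ⧸ H)) = b := funext fun i => congrArg _ (ha i)
  refine ⟨_, a, exists_div_prod_zpow_mem_of_span_eq_top (hab ▸ b.span_eq), fun e he => ?_⟩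
  refine funext (Fintype.linearIndependent_iff.1 (hab ▸ b.linearIndependent) e ?_)
  rw [sum_zsmul_ofMul_mk, (QuotientGroup.eq_one_iff _).2 he, ofMul_one]

end CommGroup

section Tower

variable {K L ι κ : Type*} [Field K] [Field L] [Algebra K L] {O : ValuationSubring L}
  {x : ι → Lˣ} {y : κ → O}

variable (K x y) in
/-- The subfield `K(x, y)` of `L`. -/
abbrev generatedField : IntermediateField K L :=
  IntermediateField.adjoin K (Set.range (Sum.elim (fun i => (x i : L)) fun j => (y j : L)))

variable (K y) in
/-- The subfield `KP(yP)` of `LP`. -/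
noncomputable abbrev residueAdjoin : IntermediateField (residueSubfield K O) (ResidueField O) :=
  IntermediateField.adjoin (residueSubfield K O) (Set.range fun j => residue O (y j))

theorem residueSubfield_le_residueAdjoin :
    residueSubfield K O ≤ (residueAdjoin K y).toSubfield := fun r hr =>
  (residueAdjoin K y).algebraMap_mem ⟨r, hr⟩

theorem valueUnits_adjoin_le
    (hy : AlgebraicIndependent (residueSubfield K O) fun j => residue O (y j)) :
    valueUnits (IntermediateField.adjoin K (Set.range fun j => (y j : L))) O ≤ valueUnits K O :=
  sup_le ((groundUnits_adjoin_le_of_aeval_mem fun _ => exists_mem_residueUnits_aeval hy).trans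
    (sup_le_sup_left residueUnits_le_unitGroup _)) le_sup_right

variable (hx : ValueIndependent K O x)
  (hy : AlgebraicIndependent (residueSubfield K O) fun j => residue O (y j))

include hx hy

theorem algebraicIndependent_sumElim :
    AlgebraicIndependent K (Sum.elim (fun i => (x i : L)) fun j => (y j : L)) := by
  have hyK : AlgebraicIndependent K fun j => (y j : L) :=
    algebraicIndependent_of_aeval_mem fun _ => exists_mem_residueUnits_aeval hy
  have hxE := hx.mono (valueUnits_adjoin_le hy)
  refine hyK.sumElim_of_tower (S := IntermediateField.adjoin K (Set.range fun j => (y j : L))) ?_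
    (algebraicIndependent_of_aeval_mem fun _ => hxE.exists_mem_residueUnits_aeval ⊥)
  rintro _ ⟨j, rfl⟩
  exact ⟨⟨_, IntermediateField.subset_adjoin _ _ ⟨j, rfl⟩⟩, rfl⟩

theorem groundUnits_generatedField_le :
    groundUnits (generatedField K x y) L ≤
      groundUnits K L ⊔ Subgroup.closure (Set.range x) ⊔
        residueUnits O (residueAdjoin K y).toSubfield := by
  have hE : groundUnits (IntermediateField.adjoin K (Set.range fun j => (y j : L))) L ≤
      groundUnits K L ⊔ residueUnits O (residueAdjoin K y).toSubfield :=
    groundUnits_adjoin_le_of_aeval_mem fun _ => exists_mem_residueUnits_aeval hy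
  have hF := groundUnits_adjoin_le_of_aeval_mem fun _ =>
    (hx.mono (valueUnits_adjoin_le hy)).exists_mem_residueUnits_aeval
      (residueAdjoin K y).toSubfield
  have htower : generatedField K x y = (IntermediateField.adjoin
      (IntermediateField.adjoin K (Set.range fun j => (y j : L)))
      (Set.range fun i => (x i : L))).restrictScalars K := by
    rw [IntermediateField.adjoin_adjoin_left, generatedField, Set.Sum.elim_range, Set.union_comm]
  rw [htower]
  refine hF.trans ?_
  refine sup_le (sup_le (hE.trans ?_) ?_) le_sup_right
  · exact sup_le_sup_right le_sup_left _
  · exact le_sup_right.trans le_sup_left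

theorem residueSubfield_generatedField_le :
    residueSubfield (generatedField K x y) O ≤ (residueAdjoin K y).toSubfield :=
  residueSubfield_le_of_groundUnits_le hx.disjoint_closure residueSubfield_le_residueAdjoin
    (groundUnits_generatedField_le hx hy)

theorem fg_quotient_valueUnits [Finite ι] [FiniteDimensional (generatedField K x y) L] :
    Group.FG (Lˣ ⧸ valueUnits K O) := by
  refine fg_quotient_of_le_sup_closure (N := valueUnits (generatedField K x y) O)
    (Set.finite_range x) (sup_le ((groundUnits_generatedField_le hx hy).trans ?_)
      (le_sup_right.trans le_sup_left))
  exact sup_le (sup_le_sup_right le_sup_left _)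
    (residueUnits_le_unitGroup.trans (le_sup_right.trans le_sup_left))

theorem essFiniteType_residueField [Finite κ] [FiniteDimensional (generatedField K x y) L] :
    Algebra.EssFiniteType (residueSubfield K O) (ResidueField O) := by
  let : Algebra (residueSubfield (generatedField K x y) O) (residueAdjoin K y) :=
    (Subfield.inclusion (residueSubfield_generatedField_le hx hy)).toAlgebra
  have : IsScalarTower (residueSubfield (generatedField K x y) O) (residueAdjoin K y)
    (ResidueField O) := .of_algebraMap_eq fun _ => rfl
  have : FiniteDimensional (residueAdjoin K y) (ResidueField O) :=
    .of_restrictScalars_finite (residueSubfield (generatedField K x y) O) _ _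
  have : Algebra.EssFiniteType (residueSubfield K O) (residueAdjoin K y) :=
    IntermediateField.essFiniteType_iff.2
      (IntermediateField.fg_adjoin_of_finite (Set.finite_range _))
  exact .comp _ (residueAdjoin K y) _

end Tower

theorem finiteDimensional_adjoin_of_isTranscendenceBasis {K L ι : Type*} [Field K] [Field L]
    [Algebra K L] [Algebra.EssFiniteType K L] {t : ι → L} (ht : IsTranscendenceBasis K t) :
    FiniteDimensional (IntermediateField.adjoin K (Set.range t)) L := by
  have := ht.isAlgebraic_field
  have := Algebra.EssFiniteType.of_comp K (IntermediateField.adjoin K (Set.range t)) L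
  exact Algebra.finite_of_essFiniteType_of_isAlgebraic

theorem isMulTorsionFree_quotient_unitGroup {L : Type*} [Field L] (O : ValuationSubring L) :
    IsMulTorsionFree (Lˣ ⧸ O.unitGroup) := by
  refine IsMulTorsionFree.of_not_isOfFinOrder (G := Lˣ ⧸ O.unitGroup) fun q hq hfin => hq ?_
  obtain ⟨z, rfl⟩ := QuotientGroup.mk_surjective q
  obtain ⟨n, hn, hzn⟩ := isOfFinOrder_iff_pow_eq_one.1 hfin
  have hv : O.valuation z ^ n = 1 := by
    rw [← map_pow, ← Units.val_pow_eq_pow_val]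
    exact (O.mem_unitGroup_iff _).1 ((QuotientGroup.eq_one_iff _).1 hzn)
  exact (QuotientGroup.eq_one_iff z).2 ((pow_eq_one_iff_of_nonneg zero_le hn.ne').1 hv)

theorem exists_mul_aeval_eq_of_mem_adjoin_range {K L ι : Type*} [Field K] [Field L] [Algebra K L]
    {x : ι → L} {z : L} (hz : z ∈ IntermediateField.adjoin K (Set.range x)) :
    ∃ r s : MvPolynomial ι K, aeval x s ≠ 0 ∧ z * aeval x s = aeval x r := by
  obtain ⟨r, s, rfl⟩ := (IntermediateField.mem_adjoin_range_iff _ _ _).1 hz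
  by_cases hs : aeval x s = 0
  · exact ⟨0, 1, by simp, by simp [hs]⟩
  · exact ⟨r, s, hs, div_mul_cancel₀ _ hs⟩

section Dictionary

variable {L : Type*} [Field L] {K : Subfield L} {O : ValuationSubring L}

theorem inMax_iff_valuation_lt_one {z : L} : InMax O z ↔ O.valuation z < 1 := by
  rcases eq_or_ne z 0 with rfl | hz
  · simp [InMax]
  · simp only [InMax, hz, false_or, ← O.valuation_le_one_iff, map_inv₀, not_le]
    exact one_lt_inv₀ (zero_lt_iff.2 ((map_ne_zero _).2 hz))

theorem isVUnit_iff_valuation_eq_one {z : L} : IsVUnit O z ↔ O.valuation z = 1 := by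
  rcases eq_or_ne z 0 with rfl | hz
  · simp [IsVUnit]
  · simp only [IsVUnit, ne_eq, hz, not_false_eq_true, true_and, ← O.valuation_le_one_iff, map_inv₀,
      inv_le_one₀ (zero_lt_iff.2 ((map_ne_zero O.valuation).2 hz)), le_antisymm_iff]

theorem inMax_iff_residue_eq_zero {a : O} : InMax O (a : L) ↔ residue O a = 0 := by
  rw [inMax_iff_valuation_lt_one, residue_eq_zero_iff, O.valuation_lt_one_iff]

theorem isVUnit_iff_residue_ne_zero {a : O} : IsVUnit O (a : L) ↔ residue O a ≠ 0 := by
  rw [isVUnit_iff_valuation_eq_one, Ne, ← inMax_iff_residue_eq_zero, inMax_iff_valuation_lt_one,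
    not_lt]
  exact ⟨ge_of_eq, (O.valuation_le_one a).antisymm⟩

theorem ValIndepMod.valueIndependent {ρ : ℕ} {x : Fin ρ → L} (hx : ValIndepMod O K x) :
    ValueIndependent K O fun i => Units.mk0 (x i) (hx.1 i) := by
  intro e he
  obtain ⟨c, hc⟩ := mem_valueUnits.1 he
  refine DFunLike.coe_injective (hx.2 e ⟨algebraMap K L c, c.1.2, by simp, ?_⟩)
  rw [Finsupp.prod_fintype _ _ fun _ => zpow_zero _] at hc
  rw [isVUnit_iff_valuation_eq_one, map_div₀]
  refine (div_eq_one_iff_eq (by simp)).2 ?_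
  simpa using hc

theorem coeff_map_integersMap_mem {σ : Type*} (q : MvPolynomial σ (O.comap (algebraMap K L)))
    (m : σ →₀ ℕ) : (map (O.subtype.comp (integersMap K O)) q).coeff m ∈ K ∧
      (map (O.subtype.comp (integersMap K O)) q).coeff m ∈ O := by
  rw [coeff_map]
  exact ⟨(coeff m q).1.2, (coeff m q).2⟩

theorem eval_map_integersMap {σ : Type*} (y : σ → O)
    (q : MvPolynomial σ (O.comap (algebraMap K L))) :
    eval (fun i => (y i : L)) (map (O.subtype.comp (integersMap K O)) q) =
      (eval₂ (integersMap K O) y q : O) := by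
  rw [eval_map]
  exact (eval₂_comp_left O.subtype _ _ _).symm

theorem ResIndep.algebraicIndependent {τ : ℕ} {y : Fin τ → L} (hy : ResIndep O K y) :
    AlgebraicIndependent (residueSubfield K O) fun i => residue O ⟨y i, hy.1 i⟩ := by
  refine (injective_iff_map_eq_zero _).2 fun p hp => by_contra fun hne => ?_
  obtain ⟨q, rfl⟩ := map_surjective _ (residueMap_surjective K O) p
  obtain ⟨m, hm⟩ := ne_zero_iff.1 hne
  refine hy.2 _ (coeff_map_integersMap_mem q) ⟨m, ?_⟩ ?_
  · rw [coeff_map] at hm ⊢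
    exact isVUnit_iff_residue_ne_zero.2 fun h => hm (Subtype.ext h)
  · rw [eval_map_integersMap (fun i => ⟨y i, hy.1 i⟩), inMax_iff_residue_eq_zero,
      residue_eval₂_integersMap]
    exact hp

theorem TrivialOn.valueUnits_eq (h : TrivialOn O K) : valueUnits K O = O.unitGroup := by
  refine sup_eq_right.2 ?_
  rintro _ ⟨c, rfl⟩
  exact isVUnit_iff_valuation_eq_one.1 ⟨Units.ne_zero _, h c c.1.2⟩

theorem TrdegEq.trdeg_eq {d : ℕ} (hd : TrdegEq K d) : Algebra.trdeg K L = d := by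
  obtain ⟨t, ht⟩ := hd
  simpa using ht.lift_cardinalMk_eq_trdeg.symm

theorem exists_value_generators_of_fg [Group.FG (Lˣ ⧸ valueUnits K O)] :
    ∃ (N : ℕ) (a : Fin N → L), (∀ i, a i ≠ 0) ∧
      ∀ z : L, z ≠ 0 → ∃ (e : Fin N → ℤ) (c : L), c ∈ K ∧ c ≠ 0 ∧
        IsVUnit O (z / ((∏ i, a i ^ e i) * c)) := by
  obtain ⟨N, a, ha⟩ := exists_generators_of_fg_quotient (H := valueUnits K O)
  refine ⟨N, fun i => a i, fun i => (a i).ne_zero, fun z hz => ?_⟩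
  obtain ⟨e, he⟩ := ha (Units.mk0 z hz)
  obtain ⟨c, hc⟩ := mem_valueUnits.1 he
  refine ⟨e, algebraMap K L c, c.1.2, by simp, ?_⟩
  rw [isVUnit_iff_valuation_eq_one, ← div_div, map_div₀]
  refine (div_eq_one_iff_eq (by simp)).2 ?_
  simpa using hc

theorem TrivialOn.exists_value_basis [Group.FG (Lˣ ⧸ valueUnits K O)] (h : TrivialOn O K) :
    ∃ (N : ℕ) (a : Fin N → L), (∀ i, a i ≠ 0) ∧
      (∀ z : L, z ≠ 0 → ∃ e : Fin N → ℤ, IsVUnit O (z / ∏ i, a i ^ e i)) ∧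
      ∀ e : Fin N → ℤ, IsVUnit O (∏ i, a i ^ e i) → e = 0 := by
  have hfg : Group.FG (Lˣ ⧸ O.unitGroup) := h.valueUnits_eq ▸ ‹_›
  have := isMulTorsionFree_quotient_unitGroup O
  obtain ⟨N, a, hgen, hind⟩ := exists_basis_of_fg_quotient (H := O.unitGroup)
  refine ⟨N, fun i => a i, fun i => (a i).ne_zero, fun z hz => ?_, fun e he => hind e ?_⟩
  · obtain ⟨e, he⟩ := hgen (Units.mk0 z hz)
    refine ⟨e, isVUnit_iff_valuation_eq_one.2 ?_⟩
    simpa using (O.mem_unitGroup_iff _).1 he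
  · simpa [O.mem_unitGroup_iff] using isVUnit_iff_valuation_eq_one.1 he

theorem exists_residue_generators_of_essFiniteType
    [Algebra.EssFiniteType (residueSubfield K O) (ResidueField O)] :
    ∃ (M : ℕ) (b : Fin M → L), (∀ i, b i ∈ O) ∧
      ∀ z ∈ O, ∃ p q : MvPolynomial (Fin M) L,
        (∀ m, p.coeff m ∈ K ∧ p.coeff m ∈ O) ∧ (∀ m, q.coeff m ∈ K ∧ q.coeff m ∈ O) ∧
        ¬ InMax O (eval b q) ∧ InMax O (z * eval b q - eval b p) := by
  obtain ⟨S, hS⟩ := (IntermediateField.fg_top_iff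
    (F := residueSubfield K O) (E := ResidueField O)).2 inferInstance
  choose b hb using fun i => residue_surjective (S.equivFin.symm i : ResidueField O)
  have hrange : Set.range (fun i => residue O (b i)) = S := by
    simp only [hb]
    exact (S.equivFin.symm.surjective.range_comp (Subtype.val : S → _)).trans Subtype.range_coe
  refine ⟨S.card, fun i => b i, fun i => (b i).2, fun z hz => ?_⟩
  obtain ⟨r, s, hs, hrs⟩ := exists_mul_aeval_eq_of_mem_adjoin_range
    (K := residueSubfield K O) (x := fun i => residue O (b i)) (z := residue O ⟨z, hz⟩)
    (by rw [hrange, hS]; trivial)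
  obtain ⟨p, rfl⟩ := map_surjective _ (residueMap_surjective K O) r
  obtain ⟨q, rfl⟩ := map_surjective _ (residueMap_surjective K O) s
  rw [← residue_eval₂_integersMap, ← residue_eval₂_integersMap] at hrs
  rw [← residue_eval₂_integersMap] at hs
  refine ⟨_, _, coeff_map_integersMap_mem p, coeff_map_integersMap_mem q, ?_, ?_⟩
  · rw [eval_map_integersMap, inMax_iff_residue_eq_zero]
    exact hs
  · rw [eval_map_integersMap, eval_map_integersMap]
    refine (inMax_iff_residue_eq_zero (a := ⟨z, hz⟩ * eval₂ _ b q - eval₂ _ b p)).2 ?_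
    rw [map_sub, map_mul, hrs, sub_self]

end Dictionary

end LocalUnif

open LocalUnif in
/-- Corollary 2.3 of the paper. Let `(L|K, P)` be an extension of
valued fields of finite transcendence degree `d`. Then
`trdeg L|K ≥ trdeg LP|KP + dim_ℚ (ℚ ⊗ (v_P L / v_P K))` (any family of elements
with rationally independent values modulo `v_P K` together with any family of
elements with residues algebraically independent over `KP` has size at most `d`).
If moreover `L|K` is finitely generated and equality holds, then `v_P L / v_P K`
and `LP|KP` are finitely generated; in particular, if `P` is trivial on `K`, then
`v_P L` is a finitely generated free abelian group. -/
theorem statement_9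
    (L : Type*) [Field L] (K : Subfield L) (O : ValuationSubring L)
    (d : ℕ) (hd : TrdegEq K d) :
    -- the inequality (2) of the paper
    (∀ (ρ τ : ℕ) (x : Fin ρ → L) (y : Fin τ → L),
       ValIndepMod O K x → ResIndep O K y → ρ + τ ≤ d) ∧
    -- finite generation in case of equality
    ((∃ S : Finset L, IntermediateField.adjoin ↥K (S : Set L) = ⊤) →
     (∃ (ρ τ : ℕ) (x : Fin ρ → L) (y : Fin τ → L),
        d = ρ + τ ∧ ValIndepMod O K x ∧ ResIndep O K y) →
     -- `v_P L / v_P K` is finitely generated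
     ((∃ (N : ℕ) (a : Fin N → L), (∀ i, a i ≠ 0) ∧
        ∀ z : L, z ≠ 0 → ∃ (e : Fin N → ℤ) (c : L), c ∈ K ∧ c ≠ 0 ∧
          IsVUnit O (z / ((∏ i, a i ^ e i) * c))) ∧
     -- `LP | KP` is finitely generated
     (∃ (M : ℕ) (b : Fin M → L), (∀ i, b i ∈ O) ∧
        ∀ z ∈ O, ∃ p q : MvPolynomial (Fin M) L,
          (∀ mo, p.coeff mo ∈ K ∧ p.coeff mo ∈ O) ∧
          (∀ mo, q.coeff mo ∈ K ∧ q.coeff mo ∈ O) ∧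
          ¬ InMax O (MvPolynomial.eval b q) ∧
          InMax O (z * MvPolynomial.eval b q - MvPolynomial.eval b p)) ∧
     -- in particular, if `P` is trivial on `K`, then `v_P L` is free abelian of
     -- finite rank and `LP` is a function field over `K`
     (TrivialOn O K →
       (∃ (N : ℕ) (a : Fin N → L), (∀ i, a i ≠ 0) ∧
          (∀ z : L, z ≠ 0 → ∃ e : Fin N → ℤ, IsVUnit O (z / ∏ i, a i ^ e i)) ∧
          ∀ e : Fin N → ℤ, IsVUnit O (∏ i, a i ^ e i) → e = 0) ∧
       (∃ (M : ℕ) (b : Fin M → L), (∀ i, b i ∈ O) ∧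
        ∀ z ∈ O, ∃ p q : MvPolynomial (Fin M) L,
          (∀ mo, p.coeff mo ∈ K) ∧ (∀ mo, q.coeff mo ∈ K) ∧
          ¬ InMax O (MvPolynomial.eval b q) ∧
          InMax O (z * MvPolynomial.eval b q - MvPolynomial.eval b p))))) := by
  have hindep {ρ τ : ℕ} {x : Fin ρ → L} {y : Fin τ → L} (hx : ValIndepMod O K x)
      (hy : ResIndep O K y) :=
    algebraicIndependent_sumElim hx.valueIndependent hy.algebraicIndependent
  refine ⟨fun ρ τ x y hx hy => ?_, ?_⟩
  · have hcard := (hindep hx hy).lift_cardinalMk_le_trdeg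
    simp only [hd.trdeg_eq, Cardinal.mk_fintype, Cardinal.lift_natCast, Fintype.card_sum,
      Fintype.card_fin] at hcard
    exact_mod_cast hcard
  rintro hfg ⟨ρ, τ, x, y, rfl, hx, hy⟩
  have : Algebra.EssFiniteType K L := IntermediateField.fg_top_iff.1 hfg
  have hbasis := (hindep hx hy).isTranscendenceBasis_of_lift_trdeg_le_of_finite
    (by simp [hd.trdeg_eq])
  have := finiteDimensional_adjoin_of_isTranscendenceBasis hbasis
  have := fg_quotient_valueUnits hx.valueIndependent hy.algebraicIndependent
  have := essFiniteType_residueField hx.valueIndependent hy.algebraicIndependent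
  refine ⟨exists_value_generators_of_fg, exists_residue_generators_of_essFiniteType,
    fun hT => ⟨hT.exists_value_basis, ?_⟩⟩
  obtain ⟨M, b, hb, h⟩ := exists_residue_generators_of_essFiniteType (K := K) (O := O)
  refine ⟨M, b, hb, fun z hz => ?_⟩
  obtain ⟨p, q, hp, hq, hpq⟩ := h z hz
  exact ⟨p, q, fun m => (hp m).1, fun m => (hq m).1, hpq⟩
end

section
/- Let L|K be a field extension and P a valuation on L which is trivial on K (so the residue map embeds K into the residue field LP). If the extension LP|K (via this embedding) is separable, then L|K is a separable field extension. -/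
/-!
By MacLane's criterion, `F|K` is separable if and only if `p`-th powers of elements of `F` that are
linearly independent over `K` are again linearly independent. Dually, every Frobenius-semilinear
functional on a finite-dimensional subspace `V` of `F` is of the form `y ↦ G (y ^ p)` with `G`
linear.

In this dual form the criterion ascends from `LP` to `L`. Dividing by an element of `V` of largest
value, we may assume that `V` lies in the valuation ring and contains `1`. The residue map is then a
nonzero linear map on `V` which commutes with `p`-th powers, so functionals on its image can be
treated in `LP`, while its kernel has smaller dimension than `V` and is treated by induction.
-/

namespace LocalUnif

open IntermediateField Submodule

section MacLane

variable (p : ℕ) (k A B : Type*) [Field k] [CommRing A] [Algebra k A] [CommRing B] [Algebra k B]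

/-- MacLane's criterion for separability of `A` over `k` in exponential characteristic `p`: raising
to the power `p` preserves linear independence over `k`. Only finite subsets of `A` are mentioned;
`MacLaneCondition.linearIndependent_pow` covers arbitrary families. For `p = 1` the condition is
trivially true. -/
def MacLaneCondition : Prop :=
  ∀ s : Finset A, LinearIndependent k ((↑) : s → A) → LinearIndependent k fun x : s => (x : A) ^ p

variable {p k A B}

lemma MacLaneCondition.linearIndependent_pow (h : MacLaneCondition p k A) {ι : Type*} {v : ι → A}
    (hv : LinearIndependent k v) : LinearIndependent k fun i => v i ^ p := by
  classical
  refine linearIndependent_iff_finset_linearIndependent.mpr fun s => ?_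
  have himage : LinearIndependent k ((↑) : s.image v → A) :=
    hv.linearIndepOn_id.mono (by simp)
  exact (h _ himage).comp (fun i : s => ⟨v i, Finset.mem_image_of_mem v i.2⟩)
    fun i j hij => Subtype.ext (hv.injective congr(($hij).1))

lemma MacLaneCondition.of_injective (h : MacLaneCondition p k B) (f : A →ₐ[k] B)
    (hf : Function.Injective f) : MacLaneCondition p k A := fun s hs =>
  .of_comp f.toLinearMap <| by
    simpa [Function.comp_def] using
      h.linearIndependent_pow (hs.map' f.toLinearMap (LinearMap.ker_eq_bot.mpr hf))

lemma MacLaneCondition.of_surjective_algebraMap {k' : Type*} [Field k'] [Algebra k k']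
    [Algebra k' A] [IsScalarTower k k' A] (hk : Function.Surjective (algebraMap k k'))
    (h : MacLaneCondition p k' A) : MacLaneCondition p k A := fun _ hs =>
  (h.linearIndependent_pow (hs.map_of_surjective_injective (algebraMap k k') (.id A) hk
    (fun _ => id) fun r a => (algebraMap_smul k' r a).symm)).restrict_scalars' k

lemma MacLaneCondition.of_isLocalization [Algebra A B] [IsScalarTower k A B] (M : Submonoid A)
    (hM : M ≤ nonZeroDivisors A) [IsLocalization M B] (h : MacLaneCondition p k A) :
    MacLaneCondition p k B := by
  intro s hs
  obtain ⟨g, hg⟩ := IsLocalization.exist_integer_multiples_of_finset M s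
  choose a ha using fun x : s => hg x x.2
  obtain ⟨u, hu⟩ := IsLocalization.map_units B g
  let incl : A →ₗ[k] B := (IsScalarTower.toAlgHom k A B).toLinearMap
  have hincl : LinearMap.ker incl = ⊥ := LinearMap.ker_eq_bot.mpr (IsLocalization.injective B hM)
  have hmul (w : Bˣ) : LinearMap.ker (LinearMap.mulLeft k (w : B)) = ⊥ :=
    LinearMap.ker_eq_bot.mpr w.isUnit.mul_right_injective
  have hau : incl ∘ a = LinearMap.mulLeft k (u : B) ∘ (↑) := by
    funext x
    simpa [incl, hu, Submonoid.smul_def, Algebra.smul_def] using ha x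
  have ha : LinearIndependent k a := .of_comp incl (hau ▸ hs.map' _ (hmul u))
  have hpow : incl ∘ (fun x => a x ^ p) =
      LinearMap.mulLeft k ((u ^ p : Bˣ) : B) ∘ fun x : s => (x : B) ^ p := by
    funext x
    simpa [incl, mul_pow] using congr($hau x ^ p)
  exact .of_comp _ (hpow ▸ (h.linearIndependent_pow ha).map' incl hincl)

variable (p) in
/-- The dual form of MacLane's criterion for the elements of a subspace `V` of `A`: every
Frobenius-semilinear functional on `V` is `y ↦ G (y ^ p)` for a linear functional `G`, defined on
all of `A`. It is used for arguments by dévissage on `V`. -/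
def FactorsThroughPow [ExpChar k p] (V : Submodule k A) : Prop :=
  ∀ f : V →ₛₗ[frobenius k p] k, ∃ G : A →ₗ[k] k, ∀ y : V, G ((y : A) ^ p) = f y

variable [ExpChar k p]

lemma FactorsThroughPow.linearIndependent_pow {ι : Type*} {v : ι → A}
    (h : FactorsThroughPow p (span k (Set.range v))) (hv : LinearIndependent k v) :
    LinearIndependent k fun i => v i ^ p := by
  classical
  refine linearIndependent_iff'.mpr fun s c hc j hj => ?_
  let b := Module.Basis.span hv
  obtain ⟨G, hG⟩ := h ((LinearMap.frobenius k k p).comp (b.coord j))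
  have hGv (i : ι) : G (v i ^ p) = if i = j then 1 else 0 := by
    have hi := hG (b i)
    rw [Module.Basis.span_apply] at hi
    simp [hi, b, LinearMap.frobenius_def, Finsupp.single_apply, ite_pow, (expChar_pos k p).ne']
  simpa [hGv, hj] using congrArg G hc

lemma factorsThroughPow_of_linearIndependent_pow [Nontrivial A] {ι : Type*} {t : ι → A}
    (ht : LinearIndependent k fun i => t i ^ p) : FactorsThroughPow p (span k (Set.range t)) := by
  have : ExpChar A p := expChar_of_injective_algebraMap (algebraMap k A).injective p
  intro f
  have hmem (i : ι) : t i ∈ span k (Set.range t) := subset_span ⟨i, rfl⟩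
  obtain ⟨G, hG⟩ :=
    LinearMap.exists_extend ((Module.Basis.span ht).constr k fun i => f ⟨t i, hmem i⟩)
  have hGt (i : ι) : G (t i ^ p) = f ⟨t i, hmem i⟩ := by
    have := congr($hG (Module.Basis.span ht i))
    rwa [Module.Basis.constr_basis, LinearMap.comp_apply, subtype_apply,
      Module.Basis.span_apply] at this
  have hGf : G.comp ((LinearMap.frobenius k A p).comp (span k (Set.range t)).subtype) = f :=
    LinearMap.ext_on_range ((span_range_subtype_eq_top_iff _ hmem).mpr rfl) fun i => hGt i
  exact ⟨G, fun y => congr($hGf y)⟩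

lemma FactorsThroughPow.mono {V W : Submodule k A} (hVW : V ≤ W) (h : FactorsThroughPow p W) :
    FactorsThroughPow p V := by
  intro f
  obtain ⟨π, hπ⟩ := (inclusion hVW).exists_leftInverse_of_injective (ker_inclusion _ _ hVW)
  obtain ⟨G, hG⟩ := h (f.comp π)
  exact ⟨G, fun y => (hG (inclusion hVW y)).trans congr(f ($hπ y))⟩

lemma MacLaneCondition.factorsThroughPow [Nontrivial A] (h : MacLaneCondition p k A)
    (V : Submodule k A) : FactorsThroughPow p V := by
  let b := Module.Basis.ofVectorSpace k V
  have hb : LinearIndependent k (V.subtype ∘ b) :=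
    b.linearIndependent.map' V.subtype V.ker_subtype
  have hspan : span k (Set.range (V.subtype ∘ b)) = V := by
    rw [Set.range_comp, ← map_span, b.span_eq, map_subtype_top]
  exact hspan ▸ factorsThroughPow_of_linearIndependent_pow (h.linearIndependent_pow hb)

lemma FactorsThroughPow.of_ker_of_range [Nontrivial A] {V : Submodule k A} (φ : V →ₗ[k] B)
    (hker : FactorsThroughPow p ((LinearMap.ker φ).map V.subtype))
    (hrange : FactorsThroughPow p (LinearMap.range φ))
    (hlift : ∀ H : B →ₗ[k] k, ∃ G : A →ₗ[k] k, ∀ y : V, G ((y : A) ^ p) = H (φ y ^ p)) :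
    FactorsThroughPow p V := by
  have : ExpChar A p := expChar_of_injective_algebraMap (algebraMap k A).injective p
  intro f
  obtain ⟨G₁, hG₁⟩ := hker (f.comp (inclusion (map_subtype_le V (LinearMap.ker φ))))
  let f₁ : V →ₛₗ[frobenius k p] k := f - G₁.comp ((LinearMap.frobenius k A p).comp V.subtype)
  have hf₁ (y : V) (hy : φ y = 0) : f₁ y = 0 := sub_eq_zero.mpr (hG₁ ⟨y, y, hy, rfl⟩).symm
  obtain ⟨σ, hσ⟩ := φ.rangeRestrict.exists_rightInverse_of_surjective φ.range_rangeRestrict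
  obtain ⟨H, hH⟩ := hrange (f₁.comp σ)
  obtain ⟨G₂, hG₂⟩ := hlift H
  refine ⟨G₁ + G₂, fun y => ?_⟩
  have hσy : φ (σ (φ.rangeRestrict y)) = φ y := congr(($hσ (φ.rangeRestrict y) : B))
  have hfσ : f₁ (σ (φ.rangeRestrict y)) = f₁ y :=
    sub_eq_zero.mp (by rw [← map_sub]; exact hf₁ _ (by rw [map_sub, hσy, sub_self]))
  calc (G₁ + G₂) ((y : A) ^ p) = G₁ ((y : A) ^ p) + H (φ y ^ p) := by
        rw [LinearMap.add_apply, hG₂]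
    _ = G₁ ((y : A) ^ p) + f₁ y := by rw [← hfσ]; exact congr(_ + $(hH (φ.rangeRestrict y)))
    _ = f y := add_sub_cancel _ _

lemma macLaneCondition_of_factorsThroughPow
    (h : ∀ V : Submodule k A, FiniteDimensional k V → FactorsThroughPow p V) :
    MacLaneCondition p k A := fun _ hs =>
  (h _ (.span_of_finite k (Set.finite_range _))).linearIndependent_pow hs

lemma MacLaneCondition.of_basis [Nontrivial A] {ι : Type*} (b : Module.Basis ι k A)
    (hb : LinearIndependent k fun i => b i ^ p) : MacLaneCondition p k A :=
  macLaneCondition_of_factorsThroughPow fun _ _ =>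
    (factorsThroughPow_of_linearIndependent_pow hb).mono (by simp [b.span_eq])

lemma MacLaneCondition.trans {M E : Type*} [Field M] [Algebra k M] [CommRing E] [Nontrivial E]
    [Algebra k E] [Algebra M E] [IsScalarTower k M E] (hM : MacLaneCondition p k M)
    (hE : MacLaneCondition p M E) : MacLaneCondition p k E := by
  let b := Module.Basis.ofVectorSpace k M
  let c := Module.Basis.ofVectorSpace M E
  refine .of_basis (b.smulTower c) ?_
  simpa [smul_pow] using linearIndependent_smul (hM.linearIndependent_pow b.linearIndependent)
    (hE.linearIndependent_pow c.linearIndependent)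

lemma macLaneCondition_mvPolynomial (σ : Type*) : MacLaneCondition p k (MvPolynomial σ k) := by
  refine .of_basis (MvPolynomial.basisMonomials σ k) ?_
  have hinj : Function.Injective fun e : σ →₀ ℕ => p • e :=
    smul_right_injective _ (expChar_pos k p).ne'
  simpa [Function.comp_def, MvPolynomial.monomial_pow] using
    (MvPolynomial.basisMonomials σ k).linearIndependent.comp _ hinj

end MacLane

section Separable

variable {p : ℕ} {K F : Type*} [Field K] [Field F] [Algebra K F] [ExpChar K p]

lemma macLaneCondition_adjoin_of_algebraicIndependent {ι : Type*} {u : ι → F}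
    (hu : AlgebraicIndependent K u) : MacLaneCondition p K (adjoin K (Set.range u)) :=
  have h : MacLaneCondition p K (FractionRing (MvPolynomial ι K)) :=
    (macLaneCondition_mvPolynomial ι).of_isLocalization (nonZeroDivisors (MvPolynomial ι K)) le_rfl
  h.of_injective hu.aevalEquivField.symm.toAlgHom hu.aevalEquivField.symm.injective

lemma macLaneCondition_of_isSeparable [Algebra.IsSeparable K F] : MacLaneCondition p K F := by
  intro s hs
  simpa using hs.map_pow_expChar_pow_of_isSeparable p 1

lemma isSeparable_adjoin_image_coe {E : IntermediateField K F} {s : Set E} {x : E}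
    (h : IsSeparable (adjoin K s) x) : IsSeparable (adjoin K ((↑) '' s : Set F)) (x : F) := by
  have hxF : IsSeparable (adjoin K s) (x : F) :=
    h.map (IsScalarTower.toAlgHom (adjoin K s) E F) (algebraMap E F).injective
  have hlift : IsSeparable (lift (adjoin K s)) (x : F) :=
    hxF.of_equiv_equiv (liftAlgEquiv (adjoin K s)).toRingEquiv (.refl F) rfl
  rwa [lift_adjoin] at hlift

variable (p) in
lemma MacLaneCondition.exists_isTranscendenceBasis [Algebra.EssFiniteType K F]
    (h : MacLaneCondition p K F) : ∃ s : Finset F, IsTranscendenceBasis K ((↑) : s → F) ∧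
      Algebra.IsSeparable (adjoin K (s : Set F)) F := by
  obtain _ | hp := ‹ExpChar K p›
  · exact exists_isTranscendenceBasis_and_isSeparable_of_perfectField K F
  · exact exists_isTranscendenceBasis_and_isSeparable_of_linearIndepOn_pow_of_essFiniteType p hp h

end Separable

section Subfield

variable (p : ℕ) {F : Type*} [Field F] {K : Subfield F} [ExpChar K p]

lemma macLaneCondition_of_isSeparableExt (h : IsSeparableExt K ⊤) : MacLaneCondition p K F := by
  intro s hs
  obtain ⟨d, u, -, hu, hsep⟩ := h s fun _ _ => trivial
  let M := adjoin K (Set.range u)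
  let E := separableClosure M F
  have : ExpChar M p := expChar_of_injective_algebraMap (algebraMap K M).injective p
  have hE : MacLaneCondition p K E :=
    (macLaneCondition_adjoin_of_algebraicIndependent hu).trans macLaneCondition_of_isSeparable
  let incl : E →ₗ[K] F := (E.val.restrictScalars K).toLinearMap
  let v (x : s) : E :=
    ⟨x, mem_separableClosure_iff.mpr (hsep x (Subfield.subset_closure (.inr x.2)))⟩
  have hv : LinearIndependent K v := .of_comp incl hs
  exact (hE.linearIndependent_pow hv).map' incl
    (LinearMap.ker_eq_bot.mpr (E.val.restrictScalars K).injective)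

lemma MacLaneCondition.isSeparableExt (h : MacLaneCondition p K F) : IsSeparableExt K ⊤ := by
  intro S _
  obtain ⟨E, hSE, _⟩ : ∃ E : IntermediateField K F, (S : Set F) ⊆ E ∧ Algebra.EssFiniteType K E :=
    ⟨adjoin K S, subset_adjoin K _, essFiniteType_iff.mpr ⟨S, rfl⟩⟩
  obtain ⟨s, hs, hsep⟩ := (h.of_injective E.val E.val.injective).exists_isTranscendenceBasis p
  let u : Fin s.card → E := (↑) ∘ s.equivFin.symm
  have hu : Set.range (E.val ∘ u) = (↑) '' (s : Set E) := by
    rw [Set.range_comp, EquivLike.range_comp, Subtype.range_coe]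
    rfl
  have hindep : AlgebraicIndependent K (E.val ∘ u) :=
    (hs.1.comp _ s.equivFin.symm.injective).map' E.val.injective
  refine ⟨s.card, E.val ∘ u, fun _ => trivial, hindep, fun x hx => ?_⟩
  have hE : Subfield.closure (K ∪ ↑S : Set F) ≤ E.toSubfield :=
    Subfield.closure_le.mpr (Set.union_subset (fun y hy => E.algebraMap_mem ⟨y, hy⟩) hSE)
  have hxs : IsSeparable (adjoin K ((↑) '' (s : Set E) : Set F)) x :=
    isSeparable_adjoin_image_coe (x := ⟨x, hE hx⟩) (hsep.isSeparable' _)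
  rwa [← hu] at hxs

lemma macLaneCondition_of_isSeparableExt_fieldRange {k : Type*} [Field k] [ExpChar k p]
    [Algebra k F] (h : IsSeparableExt (algebraMap k F).fieldRange ⊤) : MacLaneCondition p k F := by
  let φ := (algebraMap k F).rangeRestrictField
  let _ : Algebra k (algebraMap k F).fieldRange := φ.toAlgebra
  have : IsScalarTower k (algebraMap k F).fieldRange F := .of_algebraMap_eq fun _ => rfl
  have : ExpChar (algebraMap k F).fieldRange p := expChar_of_injective_ringHom φ.injective p
  exact .of_surjective_algebraMap (algebraMap k F).rangeRestrictField_bijective.2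
    (macLaneCondition_of_isSeparableExt p h)

end Subfield

section Descent

variable {p : ℕ} {K L B : Type*} [Field K] [Field L] [Algebra K L] [CommRing B] [Algebra K B]

lemma exists_mem_ne_zero_forall_div_mem (O : ValuationSubring L) [Algebra K O]
    [IsScalarTower K O L] {V : Submodule K L} [FiniteDimensional K V] (hV : V ≠ ⊥) :
    ∃ x ∈ V, x ≠ 0 ∧ ∀ y ∈ V, y / x ∈ O := by
  obtain ⟨S, rfl⟩ : V.FG := (fg_iff_finiteDimensional V).mpr inferInstance
  have hS : S.Nonempty := Finset.nonempty_iff_ne_empty.mpr (by rintro rfl; simp at hV)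
  obtain ⟨x, hxS, hmax⟩ := S.exists_max_image O.valuation hS
  have hx0 : x ≠ 0 := by
    rintro rfl
    exact hV (span_eq_bot.mpr fun y hy => by simpa using hmax y hy)
  let incl : O →ₗ[K] L := (IsScalarTower.toAlgHom K O L).toLinearMap
  have hspan : span K (S : Set L) ≤ (LinearMap.range incl).comap (LinearMap.mulRight K x⁻¹) := by
    refine span_le.mpr fun y hy => ⟨⟨y / x, ?_⟩, div_eq_mul_inv y x⟩
    rw [← O.valuation_le_one_iff, map_div₀]
    exact div_le_one_of_le₀ (hmax y hy) zero_le
  refine ⟨x, subset_span hxS, hx0, fun y hy => ?_⟩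
  obtain ⟨z, hz : (z : L) = y * x⁻¹⟩ := hspan hy
  rw [div_eq_mul_inv, ← hz]
  exact z.2

variable (p) in
lemma exists_linearMap_eq_one_and_exists_lift {O : ValuationSubring L} [Algebra K O]
    [IsScalarTower K O L] (r : O →ₐ[K] B) {V : Submodule K L} {x : L} (hxV : x ∈ V) (hx0 : x ≠ 0)
    (hx : ∀ y ∈ V, y / x ∈ O) :
    ∃ φ : V →ₗ[K] B, φ ⟨x, hxV⟩ = 1 ∧
      ∀ H : B →ₗ[K] K, ∃ G : L →ₗ[K] K, ∀ y : V, G ((y : L) ^ p) = H (φ y ^ p) := by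
  let incl : O →ₗ[K] L := (IsScalarTower.toAlgHom K O L).toLinearMap
  obtain ⟨ρ, hρincl⟩ := incl.exists_leftInverse_of_injective
    (LinearMap.ker_eq_bot.mpr Subtype.val_injective)
  have hρ (z : O) : ρ z = z := congr($hρincl z)
  let δ (y : V) : O := ⟨y / x, hx y y.2⟩
  have hδ (y : V) : (δ y : L) = y * x⁻¹ := div_eq_mul_inv _ _
  have hδx : δ ⟨x, hxV⟩ = 1 := Subtype.ext (div_self hx0)
  let φ : V →ₗ[K] B := r.toLinearMap ∘ₗ ρ ∘ₗ LinearMap.mulRight K x⁻¹ ∘ₗ V.subtype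
  have hφ (y : V) : φ y = r (δ y) := by simp [φ, ← hδ, hρ]
  -- `G z = H (r (z / x ^ p))` whenever `z / x ^ p ∈ O`; the retraction `ρ` extends this to `L`.
  refine ⟨φ, by rw [hφ, hδx, map_one], fun H =>
    ⟨H ∘ₗ r.toLinearMap ∘ₗ ρ ∘ₗ LinearMap.mulRight K (x⁻¹ ^ p), fun y => ?_⟩⟩
  have hpow : (y : L) ^ p * x⁻¹ ^ p = (δ y ^ p : O) := by
    rw [← mul_pow, ← hδ]
    rfl
  simp only [LinearMap.comp_apply, LinearMap.mulRight_apply, AlgHom.toLinearMap_apply, hpow, hρ,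
    map_pow, hφ]

lemma MacLaneCondition.factorsThroughPow_of_valuationSubring [ExpChar K p] [Nontrivial B]
    (h : MacLaneCondition p K B) {O : ValuationSubring L} [Algebra K O] [IsScalarTower K O L]
    (r : O →ₐ[K] B) (V : Submodule K L) [FiniteDimensional K V] : FactorsThroughPow p V := by
  induction hn : Module.finrank K V using Nat.strong_induction_on generalizing V with
  | _ n ih =>
    obtain rfl | hV := eq_or_ne V ⊥
    · exact fun f => ⟨0, fun y => by rw [Subsingleton.elim y 0]; simp [(expChar_pos K p).ne']⟩
    obtain ⟨x, hxV, hx0, hx⟩ := exists_mem_ne_zero_forall_div_mem O hV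
    obtain ⟨φ, hφx, hlift⟩ := exists_linearMap_eq_one_and_exists_lift p r hxV hx0 hx
    have hker : LinearMap.ker φ ≠ ⊤ := fun htop => by
      simpa [hφx] using htop.ge (mem_top (x := ⟨x, hxV⟩))
    refine .of_ker_of_range φ (ih _ ?_ _ rfl) (h.factorsThroughPow _) hlift
    rw [finrank_map_subtype_eq, ← hn]
    exact finrank_lt hker

theorem MacLaneCondition.of_valuationSubring [ExpChar K p] [Nontrivial B]
    (h : MacLaneCondition p K B) {O : ValuationSubring L} [Algebra K O] [IsScalarTower K O L]
    (r : O →ₐ[K] B) : MacLaneCondition p K L :=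
  macLaneCondition_of_factorsThroughPow fun V _ => h.factorsThroughPow_of_valuationSubring r V

end Descent

end LocalUnif

open LocalUnif in
/-- Lemma 2.6 of the paper. Let `L|K` be a field extension and
`P` a valuation on `L` which is trivial on `K`, so that the residue map embeds `K`
into the residue field `LP`. If `LP|K` is separable (in the general sense of
MacLane: every finitely generated subextension is separably generated), then `L|K`
is separable. -/
theorem statement_17
    (L : Type*) [Field L] (K : Subfield L) (O : ValuationSubring L)
    (htriv : TrivialOn O K)
    (hsep : IsSeparableExt
      (F := IsLocalRing.ResidueField ↥O)
      (RingHom.fieldRange (resEmb O K fun x hx => (htriv x hx).1)) ⊤) :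
    IsSeparableExt K ⊤ := by
  obtain ⟨p, _⟩ := ExpChar.exists K
  let _ : Algebra K O := (K.subtype.codRestrict O.toSubring fun x => (htriv x x.2).1).toAlgebra
  have : IsScalarTower K O L := .of_algebraMap_eq fun _ => rfl
  have hres : MacLaneCondition p K (IsLocalRing.ResidueField O) :=
    macLaneCondition_of_isSeparableExt_fieldRange p hsep
  exact (hres.of_valuationSubring (IsScalarTower.toAlgHom K O _)).isSeparableExt p
end
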